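/- arXiv:2411.12806 — 12 statements merged into one kernel-verified Lean document; each statement's English description precedes it below -/
import Mathlib

section
/- Let μ be a finite measure on the real line. Then the following are equivalent: (1) μ has compact support, i.e. there exists R > 0 such that μ(ℝ ∖ [−R, R]) = 0; (2) for every n ≥ 1 the function x ↦ x^n is μ-integrable and there exists a constant c > 0 such that |∫ x^n dμ(x)| ≤ c^n for all n ≥ 1. -/
open MeasureTheory

/-!
If `|x| ≤ R` almost everywhere then `|x ^ n| ≤ R ^ n`, so the `n`-th moment is at most
`R ^ n * μ ℝ`, and the mass is absorbed into the base of the exponential. Conversely, if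
`∫ x ^ n ≤ c ^ n` for even `n` then Markov's inequality gives `μ {|x| ≥ r} ≤ (c / r) ^ n`;
for `r > c` the right-hand side tends to `0`, so `μ` is supported in `[-c, c]`.
-/

open Filter Topology

section Bounded

variable {α A : Type*} [MeasurableSpace α] {μ : Measure α} [NormedRing A] [NormOneClass A]
  {f : α → A} {R : ℝ}

lemma ae_norm_pow_le_of_ae_norm_le (hf : ∀ᵐ x ∂μ, ‖f x‖ ≤ R) (n : ℕ) :
    ∀ᵐ x ∂μ, ‖f x ^ n‖ ≤ R ^ n := by
  filter_upwards [hf] with x hx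
  exact (norm_pow_le (f x) n).trans (pow_le_pow_left₀ (norm_nonneg _) hx n)

lemma integrable_pow_of_ae_norm_le [IsFiniteMeasure μ] (hfm : AEStronglyMeasurable f μ)
    (hf : ∀ᵐ x ∂μ, ‖f x‖ ≤ R) (n : ℕ) : Integrable (fun x => f x ^ n) μ :=
  Integrable.of_bound (hfm.pow n) (R ^ n) (ae_norm_pow_le_of_ae_norm_le hf n)

lemma norm_integral_pow_le_of_ae_norm_le [NormedSpace ℝ A] [IsFiniteMeasure μ]
    (hR : 0 ≤ R) (hf : ∀ᵐ x ∂μ, ‖f x‖ ≤ R) {n : ℕ} (hn : n ≠ 0) :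
    ‖∫ x, f x ^ n ∂μ‖ ≤ (R * max 1 (μ.real Set.univ)) ^ n := by
  have mass_le : μ.real Set.univ ≤ max 1 (μ.real Set.univ) ^ n :=
    (le_max_right _ _).trans (le_self_pow₀ (le_max_left _ _) hn)
  calc ‖∫ x, f x ^ n ∂μ‖
      ≤ R ^ n * μ.real Set.univ :=
        norm_integral_le_of_norm_le_const (ae_norm_pow_le_of_ae_norm_le hf n)
    _ ≤ R ^ n * max 1 (μ.real Set.univ) ^ n := by gcongr
    _ = (R * max 1 (μ.real Set.univ)) ^ n := (mul_pow _ _ _).symm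

end Bounded

section Markov

variable {α E : Type*} [MeasurableSpace α] {μ : Measure α} [SeminormedAddCommGroup E]
  {f : α → E}

lemma measure_le_norm_lt_top_of_integrable_norm_pow {r : ℝ} (hr : 0 < r) {n : ℕ}
    (hf : Integrable (fun x => ‖f x‖ ^ n) μ) : μ {x | r ≤ ‖f x‖} < ⊤ :=
  (measure_mono fun _ hx => pow_le_pow_left₀ hr.le hx n).trans_lt
    (hf.measure_ge_lt_top (pow_pos hr n))

lemma measureReal_le_norm_le_integral_norm_pow_div {r : ℝ} (hr : 0 < r) {n : ℕ}
    (hf : Integrable (fun x => ‖f x‖ ^ n) μ) :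
    μ.real {x | r ≤ ‖f x‖} ≤ (∫ x, ‖f x‖ ^ n ∂μ) / r ^ n := by
  have level_subset : {x | r ≤ ‖f x‖} ⊆ {x | r ^ n ≤ ‖f x‖ ^ n} :=
    fun _ hx => pow_le_pow_left₀ hr.le hx n
  rw [le_div_iff₀' (pow_pos hr n)]
  calc r ^ n * μ.real {x | r ≤ ‖f x‖}
      ≤ r ^ n * μ.real {x | r ^ n ≤ ‖f x‖ ^ n} := by
        gcongr
        exact (hf.measure_ge_lt_top (pow_pos hr n)).ne
    _ ≤ ∫ x, ‖f x‖ ^ n ∂μ :=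
        mul_meas_ge_le_integral_of_nonneg (ae_of_all _ fun _ => by positivity) hf _

lemma measure_le_norm_eq_zero_of_frequently_integral_norm_pow_le {c r K : ℝ} (hc : 0 ≤ c)
    (hcr : c < r)
    (hf : ∃ᶠ n : ℕ in atTop,
      Integrable (fun x => ‖f x‖ ^ n) μ ∧ ∫ x, ‖f x‖ ^ n ∂μ ≤ K * c ^ n) :
    μ {x | r ≤ ‖f x‖} = 0 := by
  have hr : 0 < r := hc.trans_lt hcr
  have tail_le : ∃ᶠ n : ℕ in atTop, μ.real {x | r ≤ ‖f x‖} ≤ K * (c / r) ^ n := by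
    refine hf.mono fun n ⟨hint, hle⟩ => ?_
    calc μ.real {x | r ≤ ‖f x‖}
        ≤ (∫ x, ‖f x‖ ^ n ∂μ) / r ^ n := measureReal_le_norm_le_integral_norm_pow_div hr hint
      _ ≤ K * c ^ n / r ^ n := by gcongr
      _ = K * (c / r) ^ n := by rw [div_pow, mul_div_assoc]
  have bound_tendsto : Tendsto (fun n : ℕ => K * (c / r) ^ n) atTop (𝓝 0) := by
    simpa using (tendsto_pow_atTop_nhds_zero_of_lt_one (div_nonneg hc hr.le)
      ((div_lt_one hr).2 hcr)).const_mul K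
  have tail_nonpos : μ.real {x | r ≤ ‖f x‖} ≤ 0 :=
    ge_of_tendsto_of_frequently bound_tendsto tail_le
  obtain ⟨n, hint, -⟩ := hf.exists
  exact (measureReal_eq_zero_iff (measure_le_norm_lt_top_of_integrable_norm_pow hr hint).ne).1
    (tail_nonpos.antisymm measureReal_nonneg)

theorem ae_norm_le_of_frequently_integral_norm_pow_le {c K : ℝ} (hc : 0 ≤ c)
    (hf : ∃ᶠ n : ℕ in atTop,
      Integrable (fun x => ‖f x‖ ^ n) μ ∧ ∫ x, ‖f x‖ ^ n ∂μ ≤ K * c ^ n) :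
    ∀ᵐ x ∂μ, ‖f x‖ ≤ c :=
  (ae_le_const_iff_forall_gt_measure_zero _ _).2 fun _ hcr =>
    measure_le_norm_eq_zero_of_frequently_integral_norm_pow_le hc hcr hf

end Markov

lemma measure_compl_Icc_neg_eq_zero_iff {μ : Measure ℝ} {R : ℝ} :
    μ (Set.Icc (-R) R)ᶜ = 0 ↔ ∀ᵐ x ∂μ, ‖x‖ ≤ R := by
  simp only [← mem_ae_iff, Real.norm_eq_abs, abs_le, Filter.Eventually, Set.Icc]

/-- Lemma 13.13 of Nica–Speicher: a finite measure on ℝ has compact support iff all its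
moments exist and grow at most exponentially. -/
theorem compact_support_iff_moments_exponential
    (μ : Measure ℝ) [IsFiniteMeasure μ] :
    (∃ R > 0, μ (Set.Icc (-R) R)ᶜ = 0) ↔
      ((∀ n : ℕ, 1 ≤ n → Integrable (fun x : ℝ => x ^ n) μ) ∧
        ∃ c > 0, ∀ n : ℕ, 1 ≤ n → |∫ x, x ^ n ∂μ| ≤ c ^ n) := by
  simp only [measure_compl_Icc_neg_eq_zero_iff]
  constructor
  · rintro ⟨R, hR, hsupp⟩
    exact ⟨fun n _ => integrable_pow_of_ae_norm_le aestronglyMeasurable_id hsupp n,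
      R * max 1 (μ.real Set.univ), by positivity,
      fun n hn => norm_integral_pow_le_of_ae_norm_le hR.le hsupp (Nat.one_le_iff_ne_zero.1 hn)⟩
  · rintro ⟨hint, c, hc, hmoment⟩
    refine ⟨c, hc, ae_norm_le_of_frequently_integral_norm_pow_le (K := 1) hc.le ?_⟩
    refine (Nat.frequently_even.and_eventually (eventually_ge_atTop 1)).mono ?_
    rintro n ⟨heven, hn⟩
    simp only [Real.norm_eq_abs, heven.pow_abs, one_mul]
    exact ⟨hint n hn, (le_abs_self _).trans (hmoment n hn)⟩
end

section
/- Fix λ > 0 and s ∈ ℕ. Let (p_N) be a sequence of natural numbers with p_N → ∞, p_N ≤ N/2, and 4·p_N²/N → λ as N → ∞. Then the hypergeometric overlap probability P_N(s) = C(2p_N, s)·C(N − 2p_N, p_N − s) / C(N, p_N) converges, as N → ∞, to the Poisson probability (λ/2)^s · e^{−λ/2} / s!. -/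
open Filter

/-!
Absorbing `s` marked elements factors the hypergeometric probability as
`C(K, s) C(n, s) / C(N, s) * C(N - K, n - s) / C(N - s, n - s)`. If `K n / N → μ`, the first factor
is asymptotic to `(K n / N) ^ s / s!`. The second is the probability that `n - s` draws from `N - s`
elements avoid `K - s` marked ones; comparing the two binomial coefficients factor by factor through
`1 + x ≤ exp x` squeezes it between two exponentials which both tend to `exp (-μ)`.
-/

open Asymptotics Topology

section Bounds

variable {N K n : ℕ}

lemma choose_le_pow_mul_choose {𝕜 : Type*} [Field 𝕜] [LinearOrder 𝕜] [IsStrictOrderedRing 𝕜]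
    {a b k : ℕ} {c : 𝕜} (h : ∀ i < k, ((a - i : ℕ) : 𝕜) ≤ c * ((b - i : ℕ) : 𝕜)) :
    (a.choose k : 𝕜) ≤ c ^ k * (b.choose k : 𝕜) := by
  have descFactorial_le : (a.descFactorial k : 𝕜) ≤ c ^ k * (b.descFactorial k : 𝕜) := by
    simp only [Nat.descFactorial_eq_prod_range, Nat.cast_prod]
    calc ∏ i ∈ Finset.range k, ((a - i : ℕ) : 𝕜)
        ≤ ∏ i ∈ Finset.range k, c * ((b - i : ℕ) : 𝕜) :=
          Finset.prod_le_prod (fun _ _ ↦ Nat.cast_nonneg _) fun i hi ↦ h i (Finset.mem_range.1 hi)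
      _ = c ^ k * ∏ i ∈ Finset.range k, ((b - i : ℕ) : 𝕜) := by
          rw [Finset.prod_mul_distrib, Finset.prod_const, Finset.card_range]
  rw [Nat.descFactorial_eq_factorial_mul_choose, Nat.descFactorial_eq_factorial_mul_choose,
    Nat.cast_mul, Nat.cast_mul, mul_left_comm] at descFactorial_le
  exact le_of_mul_le_mul_left descFactorial_le (mod_cast k.factorial_pos)

lemma choose_sub_le_exp_neg_mul_choose (N K n : ℕ) :
    ((N - K).choose n : ℝ) ≤ Real.exp (-(K * n / N : ℝ)) * N.choose n := by
  have factor_le : ∀ i < n,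
      ((N - K - i : ℕ) : ℝ) ≤ Real.exp (-(K / N : ℝ)) * ((N - i : ℕ) : ℝ) := by
    intro i _
    rcases le_total N (K + i) with hle | hle
    · rw [Nat.sub_sub, Nat.sub_eq_zero_of_le hle, Nat.cast_zero]
      positivity
    rcases N.eq_zero_or_pos with rfl | hN
    · simp
    calc ((N - K - i : ℕ) : ℝ) = N - K - i := by
          rw [Nat.sub_sub, Nat.cast_sub hle, Nat.cast_add, sub_sub]
      _ ≤ N - K - i + K * i / N := le_add_of_nonneg_right (by positivity)
      _ = (-(K / N : ℝ) + 1) * ((N - i : ℕ) : ℝ) := by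
          rw [Nat.cast_sub (by lia)]
          field
      _ ≤ Real.exp (-(K / N : ℝ)) * ((N - i : ℕ) : ℝ) := by
          gcongr
          exact Real.add_one_le_exp _
  rw [show -(K * n / N : ℝ) = n * -(K / N) by ring, Real.exp_nat_mul]
  exact choose_le_pow_mul_choose factor_le

lemma exp_neg_mul_choose_le_choose_sub (h : K + n < N) :
    Real.exp (-(K * n / (N - K - n) : ℝ)) * N.choose n ≤ ((N - K).choose n : ℝ) := by
  have gap_pos : (0 : ℝ) < N - K - n := by
    rw [sub_sub, sub_pos]
    exact_mod_cast h
  have factor_le : ∀ i < n,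
      ((N - i : ℕ) : ℝ) ≤ Real.exp (K / (N - K - n) : ℝ) * ((N - K - i : ℕ) : ℝ) := by
    intro i hi
    have gap_le : (N - K - n : ℝ) ≤ ((N - K - i : ℕ) : ℝ) := by
      rw [Nat.sub_sub, Nat.cast_sub (by lia), Nat.cast_add, ← sub_sub]
      gcongr
    calc ((N - i : ℕ) : ℝ) = K / (N - K - n) * (N - K - n) + ((N - K - i : ℕ) : ℝ) := by
          rw [div_mul_cancel₀ _ gap_pos.ne', ← Nat.cast_add]
          congr 1
          lia
      _ ≤ K / (N - K - n) * ((N - K - i : ℕ) : ℝ) + ((N - K - i : ℕ) : ℝ) := by gcongr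
      _ = (K / (N - K - n) + 1) * ((N - K - i : ℕ) : ℝ) := by ring
      _ ≤ Real.exp (K / (N - K - n) : ℝ) * ((N - K - i : ℕ) : ℝ) := by
          gcongr
          exact Real.add_one_le_exp _
  rw [Real.exp_neg, inv_mul_le_iff₀ (Real.exp_pos _), mul_comm (K : ℝ), mul_div_assoc,
    Real.exp_nat_mul]
  exact choose_le_pow_mul_choose factor_le

lemma choose_mul_choose_sub_div_choose {𝕜 : Type*} [Field 𝕜] [CharZero 𝕜] {s : ℕ}
    (hsK : s ≤ K) (hsn : s ≤ n) :
    ((K.choose s : 𝕜) * ((N - K).choose (n - s) : 𝕜)) / (N.choose n : 𝕜) =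
      (K.choose s * n.choose s / N.choose s : 𝕜) *
        (((N - s - (K - s)).choose (n - s) : 𝕜) / ((N - s).choose (n - s) : 𝕜)) := by
  have absorb : (N.choose n * n.choose s : 𝕜) = N.choose s * (N - s).choose (n - s) :=
    mod_cast Nat.choose_mul hsn
  have hn : (n.choose s : 𝕜) ≠ 0 := mod_cast (Nat.choose_pos hsn).ne'
  rw [Nat.sub_sub_sub_cancel_right hsK, div_mul_div_comm, ← absorb]
  field

end Bounds

section Limits

variable {ι : Type*} {l : Filter ι}

lemma tendsto_div_zero_of_tendsto_mul_div {𝕜 : Type*} [Field 𝕜] [LinearOrder 𝕜]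
    [IsStrictOrderedRing 𝕜] [TopologicalSpace 𝕜] [OrderTopology 𝕜] {a b c : ι → 𝕜} {μ : 𝕜}
    (h : Tendsto (fun i ↦ a i * b i / c i) l (𝓝 μ)) (hb : Tendsto b l atTop) :
    Tendsto (fun i ↦ a i / c i) l (𝓝 0) := by
  refine (h.div_atTop hb).congr' ?_
  filter_upwards [hb.eventually_ne_atTop 0] with i hi
  rw [div_right_comm, mul_div_cancel_right₀ _ hi]

lemma isEquivalent_natCast_sub_const (s : ℕ) :
    (fun n : ℕ ↦ ((n - s : ℕ) : ℝ)) ~[atTop] (fun n : ℕ ↦ (n : ℝ)) := by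
  have const_isLittleO : (fun _ : ℕ ↦ (s : ℝ)) =o[atTop] (fun n : ℕ ↦ (n : ℝ)) :=
    isLittleO_const_left.2 (.inr (tendsto_norm_atTop_atTop.comp tendsto_natCast_atTop_atTop))
  refine (IsEquivalent.refl.sub_isLittleO const_isLittleO).congr_left ?_
  filter_upwards [eventually_ge_atTop s] with n hn
  exact (Nat.cast_sub hn).symm

variable {N K n : ι → ℕ} {μ : ℝ}

lemma tendsto_choose_sub_div_choose_exp_neg (hN : ∀ᶠ i in l, 0 < N i)
    (hKN : Tendsto (fun i ↦ (K i / N i : ℝ)) l (𝓝 0))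
    (hnN : Tendsto (fun i ↦ (n i / N i : ℝ)) l (𝓝 0))
    (hμ : Tendsto (fun i ↦ (K i * n i / N i : ℝ)) l (𝓝 μ)) :
    Tendsto (fun i ↦ ((N i - K i).choose (n i) : ℝ) / ((N i).choose (n i) : ℝ)) l
      (𝓝 (Real.exp (-μ))) := by
  have sum_lt : ∀ᶠ i in l, K i + n i < N i := by
    have sum_div : Tendsto (fun i ↦ (K i / N i + n i / N i : ℝ)) l (𝓝 0) := by
      simpa using hKN.add hnN
    filter_upwards [hN, sum_div.eventually_lt_const one_pos] with i hi hlt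
    rw [← add_div, div_lt_one (mod_cast hi)] at hlt
    exact_mod_cast hlt
  have gap_lim : Tendsto (fun i ↦ (K i * n i / (N i - K i - n i) : ℝ)) l (𝓝 μ) := by
    have quotient_lim := hμ.div ((hKN.const_sub 1).sub hnN) (by norm_num)
    rw [sub_zero, sub_zero, div_one] at quotient_lim
    refine quotient_lim.congr' ?_
    filter_upwards [hN] with i hi
    have hi' : (N i : ℝ) ≠ 0 := mod_cast hi.ne'
    rw [Pi.div_apply, one_sub_div hi', ← sub_div, div_div_div_cancel_right₀ hi']
  refine tendsto_of_tendsto_of_tendsto_of_le_of_le' (Real.continuous_exp.tendsto _ |>.comp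
    gap_lim.neg) (Real.continuous_exp.tendsto _ |>.comp hμ.neg) ?_ ?_
  · filter_upwards [sum_lt] with i hi
    rw [Function.comp_apply, le_div_iff₀ (mod_cast Nat.choose_pos (by lia))]
    exact exp_neg_mul_choose_le_choose_sub hi
  · exact .of_forall fun i ↦ div_le_of_le_mul₀ (Nat.cast_nonneg _) (Real.exp_nonneg _)
      (choose_sub_le_exp_neg_mul_choose _ _ _)

lemma tendsto_choose_mul_choose_div_choose (s : ℕ) (hN : Tendsto N l atTop)
    (hK : Tendsto K l atTop) (hn : Tendsto n l atTop)
    (hμ : Tendsto (fun i ↦ (K i * n i / N i : ℝ)) l (𝓝 μ)) :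
    Tendsto (fun i ↦ ((K i).choose s * (n i).choose s / (N i).choose s : ℝ)) l
      (𝓝 (μ ^ s / s.factorial)) := by
  have equiv := ((isEquivalent_choose s).comp_tendsto hK |>.mul
    ((isEquivalent_choose s).comp_tendsto hn)).div ((isEquivalent_choose s).comp_tendsto hN)
  refine equiv.symm.tendsto_nhds (((hμ.pow s).div_const _).congr fun i ↦ ?_)
  simp only [Pi.div_apply, Pi.mul_apply, Function.comp_apply]
  field

lemma tendsto_sub_mul_sub_div_sub (s : ℕ) (hN : Tendsto N l atTop)
    (hK : Tendsto K l atTop) (hn : Tendsto n l atTop)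
    (hμ : Tendsto (fun i ↦ (K i * n i / N i : ℝ)) l (𝓝 μ)) :
    Tendsto (fun i ↦ ((K i - s : ℕ) * (n i - s : ℕ) / (N i - s : ℕ) : ℝ)) l (𝓝 μ) :=
  (((isEquivalent_natCast_sub_const s).comp_tendsto hK |>.mul
    ((isEquivalent_natCast_sub_const s).comp_tendsto hn)).div
    ((isEquivalent_natCast_sub_const s).comp_tendsto hN)).symm.tendsto_nhds hμ

theorem hypergeometric_tendsto_poisson_general (s : ℕ) (hN : Tendsto N l atTop)
    (hK : Tendsto K l atTop) (hn : Tendsto n l atTop)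
    (hμ : Tendsto (fun i ↦ (K i * n i / N i : ℝ)) l (𝓝 μ)) :
    Tendsto
      (fun i ↦ (((K i).choose s : ℝ) * ((N i - K i).choose (n i - s) : ℝ)) /
        ((N i).choose (n i) : ℝ))
      l (𝓝 (μ ^ s * Real.exp (-μ) / s.factorial)) := by
  have hμs := tendsto_sub_mul_sub_div_sub s hN hK hn hμ
  have hNs := (tendsto_sub_atTop_nat s).comp hN
  have hKs := tendsto_natCast_atTop_atTop (R := ℝ).comp ((tendsto_sub_atTop_nat s).comp hK)
  have hns := tendsto_natCast_atTop_atTop (R := ℝ).comp ((tendsto_sub_atTop_nat s).comp hn)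
  have hμs_comm :
      Tendsto (fun i ↦ ((n i - s : ℕ) * (K i - s : ℕ) / (N i - s : ℕ) : ℝ)) l (𝓝 μ) := by
    simpa only [mul_comm] using hμs
  have avoid_lim := tendsto_choose_sub_div_choose_exp_neg (hNs.eventually_gt_atTop 0)
    (tendsto_div_zero_of_tendsto_mul_div hμs hns)
    (tendsto_div_zero_of_tendsto_mul_div hμs_comm hKs) hμs
  rw [mul_div_right_comm]
  refine ((tendsto_choose_mul_choose_div_choose s hN hK hn hμ).mul avoid_lim).congr' ?_
  filter_upwards [hK.eventually_ge_atTop s, hn.eventually_ge_atTop s] with i hsK hsn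
  exact (choose_mul_choose_sub_div_choose hsK hsn).symm

end Limits

/-- In the double-scaled limit N → ∞ with 4p²/N → λ, the hypergeometric overlap
probability P_N(s) = C(2p, s)·C(N − 2p, p − s)/C(N, p) converges to the Poisson
probability (λ/2)^s e^{−λ/2}/s!. -/
theorem hypergeometric_tendsto_poisson
    (lam : ℝ) (hlam : 0 < lam) (s : ℕ) (p : ℕ → ℕ)
    (hp : Tendsto p atTop atTop)
    (hple : ∀ N, 2 * p N ≤ N)
    (hlim : Tendsto (fun N : ℕ => 4 * (p N : ℝ) ^ 2 / (N : ℝ)) atTop (nhds lam)) :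
    Tendsto
      (fun N : ℕ =>
        ((Nat.choose (2 * p N) s : ℝ) * (Nat.choose (N - 2 * p N) (p N - s) : ℝ)) /
          (Nat.choose N (p N) : ℝ))
      atTop
      (nhds ((lam / 2) ^ s * Real.exp (-lam / 2) / (Nat.factorial s : ℝ))) := by
  rw [neg_div]
  exact hypergeometric_tendsto_poisson_general s tendsto_id (hp.const_mul_atTop' two_pos) hp
    ((hlim.div_const 2).congr fun N ↦ by push_cast [id_eq]; ring)
end

section
/- Fix λ > 0. Let (p_N) be a sequence of natural numbers with p_N → ∞, p_N ≤ N/2, and 4·p_N²/N → λ as N → ∞. Then the signed sum Σ_{s=0}^{p_N} (−1)^s · C(2p_N, s)·C(N − 2p_N, p_N − s) / C(N, p_N) converges, as N → ∞, to e^{−λ}. -/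
open Filter

/-!
The overlap `S` of a fixed `m`-subset and a uniformly random `p`-subset of an `N`-set is
hypergeometric, and the signed sum is its generating function `𝔼[z ^ S]` at `z = -1`, `m = 2p`.
Expanding `z ^ S = ∑ k, C(S, k) (z - 1) ^ k` turns the alternating sum into a series in the binomial
moments `𝔼[C(S, k)] = C(m, k) C(p, k) / C(N, k)`, which satisfy
`𝔼[C(S, k)] ≤ (m p / N) ^ k / k!` and tend to the Poisson moments `μ ^ k / k!` when `m p / N → μ`
and `m, p = o(N)`. Dominated convergence gives `𝔼[z ^ S] → exp (μ (z - 1))`, where `μ = λ / 2`.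
-/

theorem sum_choose_mul_choose_mul_choose (m n : ℕ) {p k : ℕ} (hkp : k ≤ p) :
    ∑ s ∈ Finset.range (p + 1), s.choose k * (m.choose s * n.choose (p - s)) =
      m.choose k * (m + n - k).choose (p - k) := by
  obtain ⟨q, rfl⟩ := Nat.exists_eq_add_of_le hkp
  have below : ∑ s ∈ Finset.range k, s.choose k * (m.choose s * n.choose (k + q - s)) = 0 :=
    Finset.sum_eq_zero fun s hs => by
      rw [Nat.choose_eq_zero_of_lt (Finset.mem_range.1 hs), zero_mul]
  have trinomial (j : ℕ) :
      (k + j).choose k * (m.choose (k + j) * n.choose (k + q - (k + j))) =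
        m.choose k * ((m - k).choose j * n.choose (q - j)) := by
    have h := Nat.choose_mul (n := m) (Nat.le_add_right k j)
    rw [Nat.add_sub_cancel_left] at h
    rw [Nat.add_sub_add_left, ← mul_assoc, ← mul_assoc, ← h, mul_comm (m.choose _)]
  rw [add_assoc, Finset.sum_range_add, below, zero_add, Finset.sum_congr rfl fun j _ => trinomial j,
    ← Finset.mul_sum, Nat.add_sub_cancel_left]
  rcases lt_or_ge m k with hmk | hkm
  · simp [Nat.choose_eq_zero_of_lt hmk]
  · rw [Nat.sub_add_comm hkm, Nat.add_choose_eq,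
      Finset.Nat.sum_antidiagonal_eq_sum_range_succ_mk]

theorem sum_pow_mul_eq_sum_sub_one_pow_mul_sum_choose {R : Type*} [CommRing R] (z : R)
    (a : ℕ → R) (p : ℕ) :
    ∑ s ∈ Finset.range (p + 1), z ^ s * a s =
      ∑ k ∈ Finset.range (p + 1),
        (z - 1) ^ k * ∑ s ∈ Finset.range (p + 1), (s.choose k : R) * a s := by
  have binomial {s : ℕ} (hs : s ∈ Finset.range (p + 1)) :
      z ^ s = ∑ k ∈ Finset.range (p + 1), (z - 1) ^ k * (s.choose k : R) := by
    conv_lhs => rw [← sub_add_cancel z 1, add_pow]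
    simp only [one_pow, mul_one]
    refine Finset.sum_subset (Finset.range_mono (Finset.mem_range.1 hs)) fun k _ hk => ?_
    rw [Nat.choose_eq_zero_of_lt (by simpa using hk), Nat.cast_zero, mul_zero]
  simp_rw [Finset.mul_sum]
  rw [Finset.sum_comm]
  refine Finset.sum_congr rfl fun s hs => ?_
  rw [binomial hs, Finset.sum_mul]
  exact Finset.sum_congr rfl fun k _ => mul_assoc _ _ _

/-- The `k`-th binomial moment `𝔼[C(S, k)]` of the overlap `S` of a fixed `m`-subset and a uniformly
random `p`-subset of an `N`-set, in closed form; it has this meaning for `m, p ≤ N`. -/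
noncomputable def overlapMoment (N m p k : ℕ) : ℝ :=
  m.choose k * p.choose k / N.choose k

theorem choose_mul_choose_div_choose_eq_overlapMoment {N p k : ℕ} (m : ℕ) (hpN : p ≤ N)
    (hkp : k ≤ p) :
    (m.choose k * (N - k).choose (p - k) : ℝ) / N.choose p = overlapMoment N m p k := by
  have hNp : (N.choose p : ℝ) ≠ 0 := mod_cast (Nat.choose_pos hpN).ne'
  have hNk : (N.choose k : ℝ) ≠ 0 := mod_cast (Nat.choose_pos (hkp.trans hpN)).ne'
  have trinomial : (N.choose p : ℝ) * p.choose k = N.choose k * (N - k).choose (p - k) :=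
    mod_cast Nat.choose_mul hkp
  rw [overlapMoment, div_eq_div_iff hNp hNk]
  linear_combination -(m.choose k : ℝ) * trinomial

theorem sum_pow_mul_choose_mul_choose_div_choose_eq_tsum {𝕜 : Type*} [RCLike 𝕜] (z : 𝕜)
    {N m p : ℕ} (hmN : m ≤ N) (hpN : p ≤ N) :
    ∑ s ∈ Finset.range (p + 1),
        z ^ s * ((m.choose s : 𝕜) * ((N - m).choose (p - s) : 𝕜)) / (N.choose p : 𝕜) =
      ∑' k, (z - 1) ^ k * (overlapMoment N m p k : 𝕜) := by
  rw [← Finset.sum_div, sum_pow_mul_eq_sum_sub_one_pow_mul_sum_choose, Finset.sum_div,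
    tsum_eq_sum (s := Finset.range (p + 1))]
  · refine Finset.sum_congr rfl fun k hk => ?_
    have hkp : k ≤ p := Finset.mem_range_succ_iff.1 hk
    have moment := sum_choose_mul_choose_mul_choose m (N - m) hkp
    rw [Nat.add_sub_cancel' hmN] at moment
    rw [← choose_mul_choose_div_choose_eq_overlapMoment m hpN hkp, mul_div_assoc]
    push_cast
    congr 2
    exact_mod_cast moment
  · intro k hk
    rw [overlapMoment, Nat.choose_eq_zero_of_lt (n := p) (by simpa using hk)]
    simp

theorem overlapMoment_eq_prod_div_factorial (N m p k : ℕ) :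
    overlapMoment N m p k =
      (∏ i ∈ Finset.range k, ((m - i : ℕ) : ℝ) * (p - i : ℕ) / (N - i : ℕ)) / k.factorial := by
  have prod_eq (n : ℕ) :
      ∏ i ∈ Finset.range k, ((n - i : ℕ) : ℝ) = k.factorial * n.choose k := by
    rw [← Nat.cast_prod, ← Nat.descFactorial_eq_prod_range,
      Nat.descFactorial_eq_factorial_mul_choose, Nat.cast_mul]
  have hk : (k.factorial : ℝ) ≠ 0 := mod_cast k.factorial_ne_zero
  rw [Finset.prod_div_distrib, Finset.prod_mul_distrib, prod_eq, prod_eq, prod_eq, overlapMoment]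
  field_simp

theorem sub_mul_sub_div_sub_le {N p : ℕ} (m i : ℕ) (hpN : p ≤ N) :
    ((m - i : ℕ) : ℝ) * (p - i : ℕ) / (N - i : ℕ) ≤ m * p / N := by
  rcases le_or_gt p i with hpi | hip
  · rw [Nat.sub_eq_zero_of_le hpi, Nat.cast_zero, mul_zero, zero_div]
    positivity
  have hN : (0 : ℝ) < N := mod_cast hip.pos.trans_le hpN
  have hNi : (0 : ℝ) < (N - i : ℕ) := mod_cast Nat.sub_pos_of_lt (hip.trans_le hpN)
  have ratio : ((p - i : ℕ) : ℝ) / (N - i : ℕ) ≤ p / N := by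
    rw [div_le_div_iff₀ hNi hN]
    norm_cast
    rw [Nat.sub_mul, Nat.mul_sub, mul_comm p i]
    exact Nat.sub_le_sub_left (Nat.mul_le_mul_left i hpN) _
  rw [mul_div_assoc, mul_div_assoc]
  gcongr
  exact Nat.sub_le m i

theorem sub_le_sub_mul_sub_div_sub {N p : ℕ} (m i : ℕ) (hpN : p ≤ N) :
    (m * p / N - i * (m / N + p / N) : ℝ) ≤ ((m - i : ℕ) : ℝ) * (p - i : ℕ) / (N - i : ℕ) := by
  have numerator : (m * p - i * (m + p) : ℝ) ≤ ((m - i : ℕ) : ℝ) * (p - i : ℕ) := by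
    have : m * p ≤ (m - i) * (p - i) + i * (m + p) := by
      rcases le_total m i with hmi | him
      · nlinarith [Nat.mul_le_mul_right p hmi]
      rcases le_total p i with hpi | hip
      · nlinarith [Nat.mul_le_mul_left m hpi]
      obtain ⟨a, rfl⟩ := Nat.exists_eq_add_of_le him
      obtain ⟨b, rfl⟩ := Nat.exists_eq_add_of_le hip
      simp only [Nat.add_sub_cancel_left]
      nlinarith
    rw [sub_le_iff_le_add]
    exact_mod_cast this
  calc (m * p / N - i * (m / N + p / N) : ℝ)
      = (m * p - i * (m + p)) / N := by ring
    _ ≤ ((m - i : ℕ) : ℝ) * (p - i : ℕ) / N := by gcongr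
    _ ≤ ((m - i : ℕ) : ℝ) * (p - i : ℕ) / (N - i : ℕ) := by
      rcases le_or_gt N i with hNi | hiN
      · simp [Nat.sub_eq_zero_of_le (hpN.trans hNi)]
      · have : (0 : ℝ) < (N - i : ℕ) := mod_cast Nat.sub_pos_of_lt hiN
        gcongr
        exact Nat.sub_le N i

theorem overlapMoment_nonneg (N m p k : ℕ) : 0 ≤ overlapMoment N m p k := by
  unfold overlapMoment
  positivity

theorem overlapMoment_le_pow_div_factorial {N p : ℕ} (m k : ℕ) (hpN : p ≤ N) :
    overlapMoment N m p k ≤ (m * p / N : ℝ) ^ k / k.factorial := by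
  rw [overlapMoment_eq_prod_div_factorial]
  gcongr
  calc ∏ i ∈ Finset.range k, ((m - i : ℕ) : ℝ) * (p - i : ℕ) / (N - i : ℕ)
      ≤ ∏ _i ∈ Finset.range k, (m * p / N : ℝ) :=
        Finset.prod_le_prod (fun _ _ => by positivity) fun i _ => sub_mul_sub_div_sub_le m i hpN
    _ = (m * p / N : ℝ) ^ k := by rw [Finset.prod_const, Finset.card_range]

section PoissonLimit

variable {ι : Type*} {l : Filter ι} {N m p : ι → ℕ} {μ : ℝ}

theorem tendsto_overlapMoment (hpN : ∀ᶠ x in l, p x ≤ N x)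
    (hm : Tendsto (fun x => (m x : ℝ) / N x) l (nhds 0))
    (hp : Tendsto (fun x => (p x : ℝ) / N x) l (nhds 0))
    (hmp : Tendsto (fun x => (m x * p x : ℝ) / N x) l (nhds μ)) (k : ℕ) :
    Tendsto (fun x => overlapMoment (N x) (m x) (p x) k) l (nhds (μ ^ k / k.factorial)) := by
  have factor (i : ℕ) :
      Tendsto (fun x => ((m x - i : ℕ) : ℝ) * (p x - i : ℕ) / (N x - i : ℕ)) l (nhds μ) := by
    have lower := hmp.sub ((hm.add hp).const_mul (i : ℝ))
    rw [add_zero, mul_zero, sub_zero] at lower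
    exact tendsto_of_tendsto_of_tendsto_of_le_of_le' lower hmp
      (hpN.mono fun x hx => sub_le_sub_mul_sub_div_sub (m x) i hx)
      (hpN.mono fun x hx => sub_mul_sub_div_sub_le (m x) i hx)
  simp_rw [overlapMoment_eq_prod_div_factorial]
  have hprod := tendsto_finsetProd (Finset.range k) fun i _ => factor i
  rw [Finset.prod_const, Finset.card_range] at hprod
  exact hprod.div_const _

/-- The Poisson limit of the hypergeometric generating function; the averaged crossing penalty is
the case `z = -1`, `m = 2 * p`. -/
theorem signed_overlap_sum_tendsto_exp_general {𝕜 : Type*} [RCLike 𝕜] (z : 𝕜)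
    (hmN : ∀ᶠ x in l, m x ≤ N x) (hpN : ∀ᶠ x in l, p x ≤ N x)
    (hm : Tendsto (fun x => (m x : ℝ) / N x) l (nhds 0))
    (hp : Tendsto (fun x => (p x : ℝ) / N x) l (nhds 0))
    (hmp : Tendsto (fun x => (m x * p x : ℝ) / N x) l (nhds μ)) :
    Tendsto
      (fun x => ∑ s ∈ Finset.range (p x + 1),
        z ^ s * (((m x).choose s : 𝕜) * ((N x - m x).choose (p x - s) : 𝕜)) /
          ((N x).choose (p x) : 𝕜))
      l (nhds (NormedSpace.exp (μ * (z - 1)))) := by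
  have exp_series : NormedSpace.exp (μ * (z - 1)) =
      ∑' k : ℕ, (z - 1) ^ k * ((μ ^ k / k.factorial : ℝ) : 𝕜) := by
    rw [NormedSpace.exp_eq_tsum_div]
    refine tsum_congr fun k => ?_
    push_cast
    rw [mul_pow]
    ring
  have moment_series : ∀ᶠ x in l, ∑' k, (z - 1) ^ k * (overlapMoment (N x) (m x) (p x) k : 𝕜) =
      ∑ s ∈ Finset.range (p x + 1),
        z ^ s * (((m x).choose s : 𝕜) * ((N x - m x).choose (p x - s) : 𝕜)) /
          ((N x).choose (p x) : 𝕜) := by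
    filter_upwards [hmN, hpN] with x hmx hpx
    exact (sum_pow_mul_choose_mul_choose_div_choose_eq_tsum z hmx hpx).symm
  rw [exp_series]
  refine Tendsto.congr' moment_series (tendsto_tsum_of_dominated_convergence
    (Real.summable_pow_div_factorial (‖z - 1‖ * (μ + 1))) (fun k => ?_) ?_)
  · exact ((RCLike.continuous_ofReal.tendsto _).comp
      (tendsto_overlapMoment hpN hm hp hmp k)).const_mul _
  · filter_upwards [hpN, hmp.eventually_le_const (lt_add_one μ)] with x hpx hμ k
    rw [norm_mul, norm_pow, RCLike.norm_of_nonneg (overlapMoment_nonneg _ _ _ _), mul_pow,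
      mul_div_assoc]
    gcongr
    exact (overlapMoment_le_pow_div_factorial (m x) k hpx).trans (by gcongr)

theorem tendsto_div_zero_of_tendsto_sq_div {u v : ι → ℝ} {L : ℝ} (hv : Tendsto v l atTop)
    (huv : Tendsto (fun x => u x ^ 2 / v x) l (nhds L)) :
    Tendsto (fun x => u x / v x) l (nhds 0) := by
  have hsq : Tendsto (fun x => (u x / v x) ^ 2) l (nhds 0) :=
    (huv.div_atTop hv).congr fun x => by rw [div_pow, sq (v x), div_div]
  have hsqrt := hsq.sqrt
  simp_rw [Real.sqrt_sq_eq_abs, Real.sqrt_zero] at hsqrt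
  exact (tendsto_zero_iff_abs_tendsto_zero _).2 hsqrt

end PoissonLimit

/-- In the double-scaled limit N → ∞ with 4p²/N → λ, the signed sum
Σ_{s=0}^{p} (−1)^s C(2p, s)·C(N − 2p, p − s)/C(N, p) (the averaged crossing penalty
factor) converges to e^{−λ}. -/
theorem signed_overlap_sum_tendsto_exp
    (lam : ℝ) (hlam : 0 < lam) (p : ℕ → ℕ)
    (hp : Tendsto p atTop atTop)
    (hple : ∀ N, 2 * p N ≤ N)
    (hlim : Tendsto (fun N : ℕ => 4 * (p N : ℝ) ^ 2 / (N : ℝ)) atTop (nhds lam)) :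
    Tendsto
      (fun N : ℕ =>
        ∑ s ∈ Finset.range (p N + 1),
          (-1 : ℝ) ^ s *
            ((Nat.choose (2 * p N) s : ℝ) * (Nat.choose (N - 2 * p N) (p N - s) : ℝ)) /
              (Nat.choose N (p N) : ℝ))
      atTop (nhds (Real.exp (-lam))) := by
  have hp0 : Tendsto (fun N : ℕ => (p N : ℝ) / N) atTop (nhds 0) :=
    tendsto_div_zero_of_tendsto_sq_div tendsto_natCast_atTop_atTop
      ((hlim.div_const 4).congr fun N => by ring)
  have h2p0 : Tendsto (fun N : ℕ => ((2 * p N : ℕ) : ℝ) / N) atTop (nhds 0) := by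
    simpa [mul_div_assoc] using hp0.const_mul 2
  have hmean : Tendsto (fun N : ℕ => (((2 * p N : ℕ) : ℝ) * p N) / N) atTop (nhds (lam / 2)) :=
    (hlim.div_const 2).congr fun N => by push_cast; ring
  have hexp : Real.exp (-lam) = NormedSpace.exp (lam / 2 * (-1 - 1)) := by
    rw [Real.exp_eq_exp_ℝ]
    ring_nf
  rw [hexp]
  exact signed_overlap_sum_tendsto_exp_general (-1 : ℝ) (.of_forall hple)
    (.of_forall fun N => by have := hple N; omega) h2p0 hp0 hmean
end

section
/- Let q be a real number, V the free ℝ-module with basis (e_n)_{n∈ℕ}, and α, α† the linear maps with α†(e_n) = e_{n+1}, α(e_0) = 0, α(e_n) = [n]_q·e_{n−1} for n ≥ 1, where [n]_q = 1 + q + ⋯ + q^{n−1}. Then for all n, n′ ∈ ℕ, the coefficient of e_0 in α^n((α†)^{n′}(e_0)) equals δ_{n,n′} · [n]_q!, where [n]_q! = [n]_q·[n−1]_q ⋯ [1]_q and [0]_q! = 1. -/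
/-! Creating `n'` chords from the vacuum gives `e n'`, and each annihilation lowers the index by one
at the cost of one weight. So `n` annihilations leave a multiple of `e (n' - n)` with positive index
if `n < n'`, have passed through `e 0` and given zero if `n' < n`, and for `n = n'` leave the vacuum
multiplied by all the weights. The weights `[k]_q` may therefore be arbitrary. -/

section WeightedShift

theorem raising_pow_apply {R M : Type*} [Semiring R] [AddCommMonoid M] [Module R M] {e : ℕ → M}
    {adag : Module.End R M} (hadag : ∀ n, adag (e n) = e (n + 1)) (n m : ℕ) :
    (adag ^ n) (e m) = e (m + n) := by
  induction n with
  | zero => simp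
  | succ n ih => rw [pow_succ', Module.End.mul_apply, ih, hadag, add_assoc]

variable {R M : Type*} [CommSemiring R] [AddCommMonoid M] [Module R M]
  {e : ℕ → M} {w : ℕ → R} {a : Module.End R M}

theorem lowering_pow_apply_add (ha : ∀ n, a (e (n + 1)) = w n • e n) (n m : ℕ) :
    (a ^ n) (e (m + n)) = (∏ k ∈ Finset.range n, w (m + k)) • e m := by
  induction n with
  | zero => simp
  | succ n ih =>
    rw [pow_succ, Module.End.mul_apply, ← add_assoc, ha, map_smul, ih, smul_smul,
      Finset.prod_range_succ, mul_comm]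

theorem lowering_pow_apply_self (ha : ∀ n, a (e (n + 1)) = w n • e n) (n : ℕ) :
    (a ^ n) (e n) = (∏ k ∈ Finset.range n, w k) • e 0 := by
  simpa only [zero_add] using lowering_pow_apply_add ha n 0

theorem lowering_pow_apply_eq_zero_of_lt (ha0 : a (e 0) = 0)
    (ha : ∀ n, a (e (n + 1)) = w n • e n) {m n : ℕ} (hmn : m < n) : (a ^ n) (e m) = 0 := by
  have hvanish : (a ^ (m + 1)) (e m) = 0 := by
    rw [pow_succ', Module.End.mul_apply, lowering_pow_apply_self ha, map_smul, ha0, smul_zero]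
  rw [← Nat.sub_add_cancel (Nat.succ_le_of_lt hmn), pow_add, Module.End.mul_apply, hvanish,
    map_zero]

theorem q_oscillator_inner_product_general {adag : Module.End R M} {vac : Module.Dual R M}
    (hadag : ∀ n, adag (e n) = e (n + 1)) (ha0 : a (e 0) = 0)
    (ha : ∀ n, a (e (n + 1)) = w n • e n) (hvac0 : vac (e 0) = 1)
    (hvac : ∀ n, vac (e (n + 1)) = 0) (n n' : ℕ) :
    vac ((a ^ n) ((adag ^ n') (e 0))) = if n = n' then ∏ k ∈ Finset.range n, w k else 0 := by
  rw [raising_pow_apply hadag, zero_add]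
  rcases lt_trichotomy n n' with hlt | rfl | hgt
  · obtain ⟨d, rfl⟩ := Nat.exists_eq_add_of_lt hlt
    rw [if_neg hlt.ne, show n + d + 1 = d + 1 + n by ring, lowering_pow_apply_add ha, map_smul,
      hvac, smul_zero]
  · rw [if_pos rfl, lowering_pow_apply_self ha, map_smul, hvac0, smul_eq_mul, mul_one]
  · rw [if_neg hgt.ne', lowering_pow_apply_eq_zero_of_lt ha0 ha hgt, map_zero]

end WeightedShift

/-- Chord Fock space inner product: ⟨0|α^n (α†)^{n′}|0⟩ = δ_{n,n′}·[n]_q!, i.e. the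
coefficient of e_0 in α^n((α†)^{n′}(e_0)) is [n]_q! when n = n′ and 0 otherwise. -/
theorem q_oscillator_inner_product
    (q : ℝ) (a adag : Module.End ℝ (ℕ →₀ ℝ))
    (hadag : ∀ n : ℕ, adag (Finsupp.single n 1) = Finsupp.single (n + 1) 1)
    (ha0 : a (Finsupp.single 0 1) = 0)
    (ha : ∀ n : ℕ,
      a (Finsupp.single (n + 1) 1) =
        (∑ i ∈ Finset.range (n + 1), q ^ i) • Finsupp.single n 1) :
    ∀ n n' : ℕ,
      ((a ^ n) ((adag ^ n') (Finsupp.single 0 1))) 0 =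
        if n = n' then ∏ k ∈ Finset.range n, (∑ i ∈ Finset.range (k + 1), q ^ i) else 0 := by
  exact q_oscillator_inner_product_general (e := fun n => Finsupp.single n 1)
    (vac := Finsupp.lapply 0) hadag ha0 ha (by simp) (by simp)
end

section
/- Let q be a real number, d ∈ ℕ, and W the free ℝ-module with basis (e_w) indexed by words w ∈ List (Fin d). For each color a ∈ Fin d define linear maps α†_a and α_a on W by: α†_a(e_w) = e_{a::w} (prepend a), and α_a(e_w) = Σ_{i < |w|, w_i = a} q^{N_i} · e_{w∖i}, where w∖i is w with its i-th letter removed and N_i = #{ j < i : w_j ≠ a } is the number of letters before position i differing from a. Then: (i) α_a ∘ α†_a − α†_a ∘ α_a = id_W for every a, and (ii) α_a ∘ α†_b − q · (α†_b ∘ α_a) = 0 for all a ≠ b. -/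
/-!
In `a c (e_{x :: w})` the position `0` contributes `e_w` when `x = c`. At every other position the
letter to be removed lies behind `x`, so its term is the corresponding term of `a c e_w` with `x`
put back in front, times the penalty for crossing `x`: `1` if `x = c` and `q` otherwise. Hence
`a c * adag x = δ_{x,c} + penalty • (adag x * a c)`, which contains both relations.
-/

theorem linearMap_ext_single_one {R ι M : Type*} [Semiring R] [AddCommMonoid M] [Module R M]
    {f g : (ι →₀ R) →ₗ[R] M} (h : ∀ i, f (Finsupp.single i 1) = g (Finsupp.single i 1)) : f = g :=
  Finsupp.lhom_ext' fun i => LinearMap.ext_ring (h i)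

section WordOperators

variable {R C : Type*} [CommSemiring R]

/-- The creation operator `α†_x` on the free module over words: it opens a chord of color `x`
in front of all the open ones. -/
noncomputable def wordCreation (R : Type*) [CommSemiring R] (x : C) :
    Module.End R (List C →₀ R) :=
  Finsupp.lmapDomain R R (List.cons x)

theorem wordCreation_single (x : C) (w : List C) :
    wordCreation R x (Finsupp.single w 1) = Finsupp.single (x :: w) 1 :=
  Finsupp.mapDomain_single

variable [DecidableEq C]

/-- The sum over all ways to close a chord of color `c` in the word `w` of open chords, each
weighted by `q` to the number of chords of a different color that it crosses. -/
noncomputable def closeChord (q : R) (c : C) (w : List C) : List C →₀ R :=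
  ∑ i : Fin w.length,
    if w.get i = c then
      (q ^ ((w.take (i : ℕ)).countP fun x => decide (x ≠ c))) •
        Finsupp.single (w.eraseIdx (i : ℕ)) 1
    else 0

/-- The annihilation operator `α_c` on the free module over words: the linear extension of
`closeChord q c` from basis words. -/
noncomputable def wordAnnihilation (q : R) (c : C) : Module.End R (List C →₀ R) :=
  Finsupp.linearCombination R (closeChord q c)

theorem wordAnnihilation_single (q : R) (c : C) (w : List C) :
    wordAnnihilation q c (Finsupp.single w 1) = closeChord q c w := by
  rw [wordAnnihilation, Finsupp.linearCombination_single, one_smul]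

/-- The penalty factor for a chord of color `c` crossing a chord of color `x`. -/
def crossingPenalty (q : R) (c x : C) : R :=
  if x = c then 1 else q

theorem pow_countP_ne_cons (q : R) (c x : C) (w : List C) :
    q ^ ((x :: w).countP fun y => decide (y ≠ c)) =
      crossingPenalty q c x * q ^ (w.countP fun y => decide (y ≠ c)) := by
  by_cases hx : x = c
  · simp [crossingPenalty, hx]
  · simp [crossingPenalty, hx, pow_succ']

theorem closeChord_cons (q : R) (c x : C) (w : List C) :
    closeChord q c (x :: w) =
      (if x = c then Finsupp.single w 1 else 0) +
        crossingPenalty q c x • wordCreation R x (closeChord q c w) := by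
  simp only [closeChord, map_sum, Finset.smul_sum]
  refine (Fin.sum_univ_succ (n := w.length) _).trans (congrArg₂ (· + ·) ?_ ?_)
  · simp
  · refine Finset.sum_congr rfl fun i _ => ?_
    simp only [List.get_eq_getElem, Fin.val_succ, List.getElem_cons_succ, List.take_succ_cons,
      List.eraseIdx_cons_succ, pow_countP_ne_cons]
    split_ifs
    · rw [map_smul, wordCreation_single, smul_smul]
    · rw [map_zero, smul_zero]

theorem wordAnnihilation_mul_wordCreation (q : R) (c x : C) :
    wordAnnihilation q c * wordCreation R x =
      (if x = c then 1 else 0) +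
        crossingPenalty q c x • (wordCreation R x * wordAnnihilation q c) := by
  refine linearMap_ext_single_one fun w => ?_
  rw [Module.End.mul_apply, wordCreation_single, wordAnnihilation_single, closeChord_cons,
    LinearMap.add_apply, LinearMap.smul_apply, Module.End.mul_apply, wordAnnihilation_single]
  split_ifs <;> rfl

theorem wordAnnihilation_mul_wordCreation_self (q : R) (c : C) :
    wordAnnihilation q c * wordCreation R c = 1 + wordCreation R c * wordAnnihilation q c := by
  simpa [crossingPenalty] using wordAnnihilation_mul_wordCreation q c c

theorem wordAnnihilation_mul_wordCreation_of_ne (q : R) {c x : C} (h : c ≠ x) :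
    wordAnnihilation q c * wordCreation R x = q • (wordCreation R x * wordAnnihilation q c) := by
  simpa [crossingPenalty, h.symm] using wordAnnihilation_mul_wordCreation q c x

end WordOperators

theorem multicolor_q_oscillator_algebra_general
    {R C : Type*} [CommRing R] [DecidableEq C] (q : R)
    (a adag : C → Module.End R (List C →₀ R))
    (hadag : ∀ (c : C) (w : List C),
      adag c (Finsupp.single w 1) = Finsupp.single (c :: w) 1)
    (ha : ∀ (c : C) (w : List C),
      a c (Finsupp.single w 1) =
        ∑ i : Fin w.length,
          if w.get i = c then
            (q ^ ((w.take (i : ℕ)).countP fun x => decide (x ≠ c))) •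
              Finsupp.single (w.eraseIdx (i : ℕ)) 1
          else 0) :
    (∀ c : C, a c * adag c - adag c * a c = 1) ∧
      (∀ c c' : C, c ≠ c' → a c * adag c' - q • (adag c' * a c) = 0) := by
  have adag_eq (c : C) : adag c = wordCreation R c :=
    linearMap_ext_single_one fun w => (hadag c w).trans (wordCreation_single c w).symm
  have a_eq (c : C) : a c = wordAnnihilation q c :=
    linearMap_ext_single_one fun w => (ha c w).trans (wordAnnihilation_single q c w).symm
  simp only [adag_eq, a_eq]
  -- `G` is explicit because unification does not find the group structure on `Module.End`.
  exact ⟨fun c => sub_eq_of_eq_add (G := Module.End R (List C →₀ R))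
      (wordAnnihilation_mul_wordCreation_self q c),
    fun _ _ h => sub_eq_zero_of_eq (G := Module.End R (List C →₀ R))
      (wordAnnihilation_mul_wordCreation_of_ne q h)⟩

/-- The multi-color q-deformed oscillator algebra of the d-commuting SYK model:
[α_a, α†_a] = 1 and α_a α†_b − q α†_b α_a = 0 for a ≠ b, acting on the free module
whose basis is indexed by words of colors (the colors of the open chords). -/
theorem multicolor_q_oscillator_algebra
    (q : ℝ) (d : ℕ)
    (a adag : Fin d → Module.End ℝ (List (Fin d) →₀ ℝ))
    (hadag : ∀ (c : Fin d) (w : List (Fin d)),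
      adag c (Finsupp.single w 1) = Finsupp.single (c :: w) 1)
    (ha : ∀ (c : Fin d) (w : List (Fin d)),
      a c (Finsupp.single w 1) =
        ∑ i : Fin w.length,
          if w.get i = c then
            (q ^ ((w.take (i : ℕ)).countP fun x => decide (x ≠ c))) •
              Finsupp.single (w.eraseIdx (i : ℕ)) 1
          else 0) :
    (∀ c : Fin d, a c * adag c - adag c * a c = 1) ∧
      (∀ c c' : Fin d, c ≠ c' → a c * adag c' - q • (adag c' * a c) = 0) :=
  multicolor_q_oscillator_algebra_general q a adag hadag ha
end

section
/- Let d > 0. The function R_c(z) = √(d/(2π)) · ∫_ℝ e^{−dx²/2}/(z − x) dx, defined for complex z with Im z ≠ 0, is holomorphic there and satisfies the differential equation (1/d)·R_c′(z) + z·R_c(z) − 1 = 0. -/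
/-!
Up to sign, `R_c` is the resolvent transform of the centred Gaussian measure of variance `1 / d`.
Stein's identity `𝔼[(X - m) f(X)] = v 𝔼[f'(X)]` for a Gaussian `X` of mean `m` and variance `v`,
applied to `f x = 1 / (x - z)`, expresses the derivative `𝔼[1 / (X - z) ^ 2]` of the transform
through `𝔼[(X - m) / (X - z)] = 1 + (z - m) 𝔼[1 / (X - z)]`.
-/

open MeasureTheory ProbabilityTheory
open scoped NNReal

section Stein

variable {E : Type*} [NormedAddCommGroup E] [NormedSpace ℝ E] {m : ℝ} {v : ℝ≥0}

lemma hasDerivAt_gaussianPDFReal (m : ℝ) (v : ℝ≥0) (x : ℝ) :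
    HasDerivAt (gaussianPDFReal m v) (-((x - m) / v) * gaussianPDFReal m v x) x := by
  have deriv_exponent : HasDerivAt (fun x ↦ -(x - m) ^ 2 / (2 * v)) (-((x - m) / v)) x := by
    refine ((((hasDerivAt_id x).sub_const m).fun_pow 2).neg.div_const (2 * (v : ℝ))).congr_deriv ?_
    push_cast
    rw [id_eq]
    ring
  refine (deriv_exponent.exp.const_mul (√(2 * Real.pi * v))⁻¹).congr_deriv ?_
  rw [gaussianPDFReal]
  ring

lemma integrable_gaussianReal_iff_integrable_smul {f : ℝ → E} (hv : v ≠ 0) :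
    Integrable f (gaussianReal m v) ↔ Integrable fun x ↦ gaussianPDFReal m v x • f x := by
  simp only [gaussianReal_of_var_ne_zero m hv, integrable_withDensity_iff_integrable_smul'
    (measurable_gaussianPDF m v) (.of_forall fun _ ↦ gaussianPDF_lt_top), toReal_gaussianPDF]

theorem integral_sub_mean_smul_gaussianReal {f f' : ℝ → E} (hff' : ∀ x, HasDerivAt f (f' x) x)
    (hf : Integrable f (gaussianReal m v)) (hf' : Integrable f' (gaussianReal m v))
    (hxf : Integrable (fun x ↦ (x - m) • f x) (gaussianReal m v)) :
    ∫ x, (x - m) • f x ∂gaussianReal m v = (v : ℝ) • ∫ x, f' x ∂gaussianReal m v := by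
  rcases eq_or_ne v 0 with rfl | hv
  · rw [gaussianReal_zero_var, integral_eq_zero_of_ae (by simp [Filter.EventuallyEq, ae_dirac_eq]),
      NNReal.coe_zero, zero_smul]
  have hv' : (v : ℝ) ≠ 0 := by exact_mod_cast hv
  have deriv_pdf_smul (x : ℝ) : (-((x - m) / v) * gaussianPDFReal m v x) • f x =
      (-(v : ℝ)⁻¹) • gaussianPDFReal m v x • (x - m) • f x := by
    simp only [smul_smul]
    ring_nf
  rw [integrable_gaussianReal_iff_integrable_smul hv] at hf hf' hxf
  have integrable_deriv_pdf_smul :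
      Integrable fun x ↦ (-((x - m) / v) * gaussianPDFReal m v x) • f x := by
    simpa only [deriv_pdf_smul] using hxf.fun_smul (-(v : ℝ)⁻¹)
  have by_parts : ∫ x, gaussianPDFReal m v x • f' x =
      -∫ x, (-((x - m) / v) * gaussianPDFReal m v x) • f x :=
    integral_bilinear_hasDerivAt_right_eq_neg_left_of_integrable
      (L := ContinuousLinearMap.lsmul ℝ ℝ) (fun x _ ↦ hasDerivAt_gaussianPDFReal m v x)
      (fun x _ ↦ hff' x) hf' integrable_deriv_pdf_smul hf
  simp only [integral_gaussianReal_eq_integral_smul hv]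
  simp only [by_parts, deriv_pdf_smul]
  rw [integral_smul, neg_smul, neg_neg, smul_inv_smul₀ hv']

end Stein

section Resolvent

variable {z : ℂ}

lemma complex_resolvent_eq_inv (z : ℂ) (x : ℝ) : resolvent z x = ((x : ℂ) - z)⁻¹ := by
  simp [resolvent]

lemma ofReal_sub_ne_zero (hz : z.im ≠ 0) (x : ℝ) : (x : ℂ) - z ≠ 0 := fun h ↦
  hz (by simpa using congrArg Complex.im h)

lemma mem_resolventSet_of_im_ne_zero (hz : z.im ≠ 0) (x : ℝ) : x ∈ resolventSet ℝ z :=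
  (ofReal_sub_ne_zero hz x).isUnit

lemma notMem_algebraMap_image_of_im_ne_zero (hz : z.im ≠ 0) (s : Set ℝ) :
    z ∉ algebraMap ℝ ℂ '' s := by
  rintro ⟨x, -, rfl⟩
  exact hz (Complex.ofReal_im x)

variable {μ : Measure ℝ} [IsFiniteMeasure μ]

lemma integrable_resolvent_pow (hz : z ∉ algebraMap ℝ ℂ '' μ.support) (n : ℕ) :
    Integrable (fun x ↦ resolvent z x ^ n) μ := by
  refine .of_bound (by fun_prop) ((Metric.infDist z (algebraMap ℝ ℂ '' μ.support))⁻¹ ^ n) ?_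
  filter_upwards [Measure.support_mem_ae] with x hx
  rw [norm_pow]
  gcongr
  exact norm_resolvent_le_inv_infDist_support hz hx

lemma sub_smul_resolvent (hz : z.im ≠ 0) (a x : ℝ) :
    (x - a) • resolvent z x = 1 + (z - a) * resolvent z x := by
  rw [complex_resolvent_eq_inv, Complex.real_smul]
  field_simp [ofReal_sub_ne_zero hz x]
  push_cast
  ring

lemma integrable_sub_smul_resolvent (hz : z.im ≠ 0) (a : ℝ) :
    Integrable (fun x ↦ (x - a) • resolvent z x) μ := by
  simp only [sub_smul_resolvent hz]
  exact (integrable_const 1).add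
    ((integrable_resolvent (notMem_algebraMap_image_of_im_ne_zero hz _)).const_mul _)

lemma integral_sub_smul_resolvent (hz : z.im ≠ 0) (a : ℝ) :
    ∫ x, (x - a) • resolvent z x ∂μ = μ.real Set.univ + (z - a) * resolventTransform μ z := by
  have integrable_resolvent_z : Integrable (resolvent z) μ :=
    integrable_resolvent (notMem_algebraMap_image_of_im_ne_zero hz _)
  simp only [sub_smul_resolvent hz]
  rw [integral_add (integrable_const 1) (integrable_resolvent_z.const_mul _), integral_const_mul,
    resolventTransform_apply]
  simp

lemma differentiableAt_resolventTransform_of_im_ne_zero (hz : z.im ≠ 0) :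
    DifferentiableAt ℂ (resolventTransform μ) z :=
  (hasDerivAt_resolventTransform z (notMem_algebraMap_image_of_im_ne_zero hz _)).differentiableAt

end Resolvent

theorem var_mul_deriv_resolventTransform_gaussianReal (m : ℝ) (v : ℝ≥0) {z : ℂ} (hz : z.im ≠ 0) :
    v * deriv (resolventTransform (gaussianReal m v)) z =
      -(1 + (z - m) * resolventTransform (gaussianReal m v) z) := by
  have off_support := notMem_algebraMap_image_of_im_ne_zero hz (gaussianReal m v).support
  have stein := integral_sub_mean_smul_gaussianReal (m := m) (v := v)
    (fun x ↦ spectrum.hasDerivAt_resolvent_const_left (mem_resolventSet_of_im_ne_zero hz x))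
    (integrable_resolvent off_support) (integrable_resolvent_pow off_support 2).neg
    (integrable_sub_smul_resolvent hz m)
  rw [integral_sub_smul_resolvent hz, integral_neg, probReal_univ, smul_neg, Complex.real_smul,
    Complex.ofReal_one] at stein
  rw [(hasDerivAt_resolventTransform z off_support).deriv]
  exact (neg_eq_iff_eq_neg.mpr stein).symm

lemma gaussianPDFReal_zero_inv (d : ℝ≥0) (x : ℝ) :
    gaussianPDFReal 0 d⁻¹ x = √(d / (2 * Real.pi)) * Real.exp (-(d * x ^ 2) / 2) := by
  rw [gaussianPDFReal, ← Real.sqrt_inv]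
  congr 2
  · simp [mul_comm, div_eq_mul_inv]
  · push_cast
    rw [sub_zero, ← div_div, div_inv_eq_mul]
    ring

lemma resolventTransform_gaussianReal_zero_inv {d : ℝ≥0} (hd : d ≠ 0) (z : ℂ) :
    resolventTransform (gaussianReal 0 d⁻¹) z =
      -(√(d / (2 * Real.pi)) * ∫ x : ℝ, (Real.exp (-(d * x ^ 2) / 2) : ℂ) / (z - x)) := by
  rw [resolventTransform_apply, integral_gaussianReal_eq_integral_smul (inv_ne_zero hd),
    ← integral_const_mul, ← integral_neg]
  congr with x
  rw [complex_resolvent_eq_inv, gaussianPDFReal_zero_inv, ← neg_sub z, inv_neg, Complex.real_smul]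
  push_cast
  ring

/-- The Stieltjes transform R_c(z) = √(d/(2π))∫ e^{−dx²/2}/(z−x) dx of the Gaussian
spectral density is holomorphic off the real axis and satisfies
(1/d)·R_c′(z) + z·R_c(z) − 1 = 0. -/
theorem gaussian_resolvent_ode
    (d : ℝ) (hd : 0 < d) (Rc : ℂ → ℂ)
    (hRc : ∀ z : ℂ, Rc z =
      (Real.sqrt (d / (2 * Real.pi)) : ℂ) *
        ∫ x : ℝ, (Real.exp (-(d * x ^ 2) / 2) : ℂ) / (z - (x : ℂ))) :
    DifferentiableOn ℂ Rc {z : ℂ | z.im ≠ 0} ∧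
      ∀ z : ℂ, z.im ≠ 0 →
        (1 / (d : ℂ)) * deriv Rc z + z * Rc z - 1 = 0 := by
  lift d to ℝ≥0 using hd.le
  have d_ne_zero : d ≠ 0 := by exact_mod_cast hd.ne'
  have Rc_eq : Rc = -resolventTransform (gaussianReal 0 d⁻¹) := by
    funext z
    rw [hRc, Pi.neg_apply, resolventTransform_gaussianReal_zero_inv d_ne_zero, neg_neg]
  rw [Rc_eq]
  refine ⟨fun z hz ↦ ?_, fun z hz ↦ ?_⟩
  · exact (differentiableAt_resolventTransform_of_im_ne_zero hz).neg.differentiableWithinAt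
  · have ode := var_mul_deriv_resolventTransform_gaussianReal 0 d⁻¹ hz
    push_cast at ode
    rw [deriv.neg, Pi.neg_apply]
    linear_combination -ode
end

section
/- Let d ≥ 1 be real, U, Ω ⊆ ℂ open. Suppose F : U → ℂ is differentiable and satisfies F′(u) = 1/(d·(1 − u·F(u))) for all u ∈ U, and suppose R : Ω → ℂ is differentiable with R(z) ≠ 0, R(z) ∈ U, and z/d + (d−1)/(d·R(z)) = F(R(z)) for all z ∈ Ω. Define w(z) = z/d + (1 − 1/d)/R(z). Then R′(z) = d·(1 − w(z)·R(z))·w′(z) on Ω; in particular, wherever w′(z) ≠ 0, the function r = R satisfies the same equation as the Gaussian resolvent in the variable w: (1/d)·(dr/dw) + w·r − 1 = 0. -/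
/-!
On `Ω` the subordination relation says `w = F ∘ R`, so the chain rule gives
`w' = R' / (d (1 - w R))`, and it remains to see that `1 - u F(u)` has no zero in `U`; at such a
zero the equation for `F'` would read `F' = 1 / 0 = 0`. There `u F(u) = 1` forces `F(u) ≠ 0`, so
`1 - u F(u)` has derivative `-F(u) ≠ 0` and the zero is isolated. But then the holomorphic function
`F'` would agree, off that point, with the reciprocal of a function tending to `0`.
-/

open Filter Topology

theorem ne_zero_of_continuousAt_inv {X G : Type*} [TopologicalSpace X] [GroupWithZero G]
    [TopologicalSpace G] [ContinuousMul G] [T1Space G] {g : X → G} {a : X}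
    (hg : ContinuousAt g a) (hinv : ContinuousAt (fun x => (g x)⁻¹) a)
    (hne : ∃ᶠ x in 𝓝 a, g x ≠ 0) : g a ≠ 0 := by
  have hmul : ∃ᶠ x in 𝓝 a, g x * (g x)⁻¹ ∈ ({1} : Set G) :=
    hne.mono fun _ hx => mul_inv_cancel₀ hx
  have hone : g a * (g a)⁻¹ = 1 :=
    isClosed_singleton.mem_of_frequently_of_tendsto hmul (hg.mul hinv)
  exact left_ne_zero_of_mul_eq_one hone

theorem ne_zero_of_hasDerivAt_inv {U : Set ℂ} (hU : IsOpen U) {f g : ℂ → ℂ}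
    (hf : ∀ x ∈ U, HasDerivAt f (g x)⁻¹ x) {u g' : ℂ} (hu : u ∈ U)
    (hg : HasDerivAt g g' u) (hg' : g u = 0 → g' ≠ 0) : g u ≠ 0 := by
  intro hzero
  have hfdiff : DifferentiableOn ℂ f U := fun x hx =>
    (hf x hx).differentiableAt.differentiableWithinAt
  have hderiv : deriv f =ᶠ[𝓝 u] fun x => (g x)⁻¹ := by
    filter_upwards [hU.mem_nhds hu] with x hx using (hf x hx).deriv
  have hinv : ContinuousAt (fun x => (g x)⁻¹) u :=
    ((hfdiff.deriv hU).differentiableAt (hU.mem_nhds hu)).continuousAt.congr hderiv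
  have hne : ∃ᶠ x in 𝓝 u, g x ≠ 0 :=
    (hg.eventually_ne (hg' hzero)).frequently.filter_mono nhdsWithin_le_nhds
  exact ne_zero_of_continuousAt_inv hg.continuousAt hinv hne hzero

theorem one_sub_mul_ne_zero_of_hasDerivAt {d : ℂ} (hd : d ≠ 0) {U : Set ℂ} (hU : IsOpen U)
    {F : ℂ → ℂ} (hF : ∀ u ∈ U, HasDerivAt F (1 / (d * (1 - u * F u))) u) {u : ℂ} (hu : u ∈ U) :
    1 - u * F u ≠ 0 := by
  have hdenom : HasDerivAt (fun x => d * (1 - x * F x))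
      (d * -(1 * F u + u * (1 / (d * (1 - u * F u))))) u :=
    (((hasDerivAt_id u).mul (hF u hu)).const_sub 1).const_mul d
  have hne : d * (1 - u * F u) ≠ 0 := by
    refine ne_zero_of_hasDerivAt_inv (f := F) (g := fun x => d * (1 - x * F x)) hU
      (by simpa only [one_div] using hF) hu hdenom fun hzero => ?_
    have hFu : F u ≠ 0 := fun h => hd (by simpa [h] using hzero)
    simpa [hzero, hd] using hFu
  exact right_ne_zero_of_mul hne

theorem deriv_eq_mul_deriv_of_eventuallyEq_comp {𝕜 : Type*} [NontriviallyNormedField 𝕜]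
    {f r w : 𝕜 → 𝕜} {a z : 𝕜} (ha : a ≠ 0) (hf : HasDerivAt f (1 / a) (r z))
    (hr : DifferentiableAt 𝕜 r z) (hw : w =ᶠ[𝓝 z] f ∘ r) : deriv r z = a * deriv w z := by
  rw [hw.deriv_eq, (hf.comp z hr.hasDerivAt).deriv, ← mul_assoc, mul_one_div_cancel ha, one_mul]

theorem subordination_resolvent_ode_general {d : ℂ} (hd : d ≠ 0) {U Ω : Set ℂ}
    (hU : IsOpen U) (hΩ : IsOpen Ω) {F R w : ℂ → ℂ}
    (hF : ∀ u ∈ U, HasDerivAt F (1 / (d * (1 - u * F u))) u)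
    (hR : ∀ z ∈ Ω, DifferentiableAt ℂ R z) (hRU : ∀ z ∈ Ω, R z ∈ U)
    (hw : ∀ z ∈ Ω, w z = F (R z)) :
    (∀ z ∈ Ω, deriv R z = d * (1 - w z * R z) * deriv w z) ∧
      ∀ z ∈ Ω, deriv w z ≠ 0 → (1 / d) * (deriv R z / deriv w z) + w z * R z - 1 = 0 := by
  have hderiv : ∀ z ∈ Ω, deriv R z = d * (1 - w z * R z) * deriv w z := by
    intro z hz
    have hdenom : d * (1 - R z * F (R z)) ≠ 0 :=
      mul_ne_zero hd (one_sub_mul_ne_zero_of_hasDerivAt hd hU hF (hRU z hz))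
    rw [hw z hz, mul_comm (F (R z))]
    exact deriv_eq_mul_deriv_of_eventuallyEq_comp hdenom (hF _ (hRU z hz)) (hR z hz)
      (eventually_of_mem (hΩ.mem_nhds hz) hw)
  refine ⟨hderiv, fun z hz hw' => ?_⟩
  rw [hderiv z hz, mul_div_cancel_right₀ _ hw', one_div, inv_mul_cancel_left₀ hd]
  ring

/-- Free-probability subordination for the q = 0 d-commuting SYK resolvent: if F is the
functional inverse of the Gaussian resolvent, so F′(u) = 1/(d(1 − uF(u))), and R obeys the
subordination relation z/d + (d−1)/(dR(z)) = F(R(z)), then with w(z) = z/d + (1−1/d)/R(z)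
one has R′(z) = d(1 − w(z)R(z))·w′(z); in particular, where w′(z) ≠ 0, R satisfies the
Gaussian resolvent equation (1/d)(dR/dw) + wR − 1 = 0 in the variable w. -/
theorem subordination_resolvent_ode
    (d : ℝ) (hd : 1 ≤ d) (U Ω : Set ℂ) (hU : IsOpen U) (hΩ : IsOpen Ω)
    (F R : ℂ → ℂ)
    (hF : ∀ u ∈ U, HasDerivAt F (1 / ((d : ℂ) * (1 - u * F u))) u)
    (hRdiff : ∀ z ∈ Ω, DifferentiableAt ℂ R z)
    (hRne : ∀ z ∈ Ω, R z ≠ 0)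
    (hRU : ∀ z ∈ Ω, R z ∈ U)
    (hsub : ∀ z ∈ Ω, z / (d : ℂ) + ((d : ℂ) - 1) / ((d : ℂ) * R z) = F (R z)) :
    let w : ℂ → ℂ := fun z => z / (d : ℂ) + (1 - 1 / (d : ℂ)) / R z
    (∀ z ∈ Ω, deriv R z = (d : ℂ) * (1 - w z * R z) * deriv w z) ∧
      ∀ z ∈ Ω, deriv w z ≠ 0 →
        (1 / (d : ℂ)) * (deriv R z / deriv w z) + w z * R z - 1 = 0 := by
  have hd0 : (d : ℂ) ≠ 0 := by exact_mod_cast (zero_lt_one.trans_le hd).ne'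
  exact subordination_resolvent_ode_general hd0 hU hΩ hF hRdiff hRU fun z hz => by
    rw [← hsub z hz, ← div_div, sub_div (d : ℂ), div_self hd0]
end

section
/- Let d > 0 and let w ∈ ℂ with Im w > 0. Define the (complex-extended) Dawson function D(u) = e^{−u²}·u·∫_0^1 e^{t²u²} dt. Then √(d/(2π)) · ∫_ℝ e^{−dx²/2}/(w − x) dx = √(2d)·D(√(d/2)·w) − i·√(πd/2)·e^{−dw²/2}. For Im w < 0 the same identity holds with + i·√(πd/2)·e^{−dw²/2} instead. -/
/-!
For `Im w > 0` write `(w - x)⁻¹ = -i ∫₀^∞ e^{i(w - x)s} ds`. By Fubini, the Stieltjes transform of a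
finite measure is a half-line Laplace transform of its characteristic function; for a Gaussian, this
is a multiple of `∫₀^∞ e^{-b(s + c)²} ds` after completing the square. Since `e^{-bz²}` has an
entire primitive and decays along the positive real direction, moving the ray `c + [0, ∞)` to
`[0, ∞)` costs only the integral over the segment `[0, c]`: the ray gives the exponential term, and
the segment gives the Dawson function. The lower half-plane follows by complex conjugation.
-/

open Complex Filter MeasureTheory ProbabilityTheory Set Topology
open scoped ComplexConjugate NNReal Real

section ContourShift

variable {E : Type*} [NormedAddCommGroup E] [NormedSpace ℂ E] [CompleteSpace E]

theorem integral_Ioi_comp_add_of_tendsto {f : ℂ → E} (hf : Differentiable ℂ f) (a : ℝ) (c : ℂ)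
    (hf_real : IntegrableOn (fun s : ℝ ↦ f s) (Ioi a))
    (hf_shift : IntegrableOn (fun s : ℝ ↦ f (s + c)) (Ioi a))
    (hf_far : Tendsto (fun s : ℝ ↦ ∫ t : ℝ in 0..1, f (s + t • c)) atTop (𝓝 0)) :
    ∫ s : ℝ in Ioi a, f (s + c) =
      (∫ s : ℝ in Ioi a, f s) - c • ∫ t : ℝ in 0..1, f (a + t • c) := by
  obtain ⟨F, hF⟩ := hf.isExactOn_univ
  replace hF (z : ℂ) : HasDerivAt F (f z) z := hF z (mem_univ z)
  have segment (z : ℂ) : c • ∫ t : ℝ in 0..1, f (z + t • c) = F (z + c) - F z :=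
    intervalIntegral.integral_unitInterval_deriv_eq_sub
      (hf.continuous.comp (by fun_prop)).continuousOn fun t _ ↦ hF (z + t • c)
  have ray (z : ℂ) (hz : IntegrableOn (fun s : ℝ ↦ f (s + z)) (Ioi a)) :
      Tendsto (fun s : ℝ ↦ F (s + z) - F (a + z)) atTop (𝓝 (∫ s : ℝ in Ioi a, f (s + z))) := by
    refine (intervalIntegral_tendsto_integral_Ioi a hz tendsto_id).congr fun r ↦ ?_
    exact intervalIntegral.integral_eq_sub_of_hasDerivAt
      (fun s _ ↦ by simpa using (hF (s + z)).scomp s (ofRealCLM.hasDerivAt.add_const z))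
      ((hf.continuous.comp (continuous_ofReal.add_const z)).intervalIntegrable a r)
  have ray_real : Tendsto (fun s : ℝ ↦ F s - F a) atTop (𝓝 (∫ s : ℝ in Ioi a, f s)) := by
    simpa using ray 0 (by simpa using hf_real)
  have far : Tendsto (fun s : ℝ ↦ F (s + c) - F s) atTop (𝓝 0) := by
    simpa only [segment, smul_zero] using hf_far.const_smul c
  rw [segment]
  refine tendsto_nhds_unique (ray c hf_shift) ?_
  convert (far.add ray_real).sub_const (F (a + c) - F a) using 2
  · abel
  · rw [zero_add]

end ContourShift

section ShiftedGaussian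

theorem norm_cexp_neg_mul_sq_add_le (b z : ℂ) (s : ℝ) :
    ‖cexp (-b * (s + z) ^ 2)‖ ≤
      Real.exp (-b.re * s ^ 2 + 2 * (‖b‖ * ‖z‖) * |s| + ‖b‖ * ‖z‖ ^ 2) := by
  have expand : (-b * (s + z) ^ 2).re = -b.re * s ^ 2 - 2 * (b * z).re * s - (b * z ^ 2).re := by
    rw [show -b * (s + z) ^ 2 = -(b * ((s ^ 2 : ℝ) : ℂ)) - b * z * ((2 * s : ℝ) : ℂ) - b * z ^ 2 by
      push_cast; ring]
    simp only [sub_re, neg_re, re_mul_ofReal]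
    ring
  have linear : -((b * z).re * s) ≤ ‖b‖ * ‖z‖ * |s| :=
    calc -((b * z).re * s) ≤ |(b * z).re| * |s| := abs_mul (b * z).re s ▸ neg_le_abs _
      _ ≤ ‖b‖ * ‖z‖ * |s| := by rw [← norm_mul]; gcongr; exact abs_re_le_norm _
  have const : -(b * z ^ 2).re ≤ ‖b‖ * ‖z‖ ^ 2 :=
    calc -(b * z ^ 2).re ≤ ‖b * z ^ 2‖ := (neg_le_abs _).trans (abs_re_le_norm _)
      _ = ‖b‖ * ‖z‖ ^ 2 := by rw [norm_mul, norm_pow]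
  rw [norm_exp, Real.exp_le_exp, expand]
  linarith

theorem tendsto_exp_neg_mul_sq_add_mul_abs_add {a : ℝ} (ha : 0 < a) (k l : ℝ) :
    Tendsto (fun s : ℝ ↦ Real.exp (-a * s ^ 2 + k * |s| + l)) atTop (𝓝 0) := by
  have factored : Tendsto (fun s : ℝ ↦ s * (a * s - k) - l) atTop atTop :=
    tendsto_atTop_add_const_right _ _ <| tendsto_id.atTop_mul_atTop₀ <|
      tendsto_atTop_add_const_right _ _ <| tendsto_id.const_mul_atTop ha
  refine (Real.tendsto_exp_neg_atTop_nhds_zero.comp factored).congr' ?_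
  filter_upwards [eventually_ge_atTop 0] with s hs
  rw [abs_of_nonneg hs, Function.comp_apply]
  ring_nf

variable {b : ℂ}

theorem tendsto_integral_cexp_neg_mul_sq_add_smul (hb : 0 < b.re) (c : ℂ) :
    Tendsto (fun s : ℝ ↦ ∫ t : ℝ in 0..1, cexp (-b * (s + t • c) ^ 2)) atTop (𝓝 0) := by
  refine squeeze_zero_norm (fun s ↦ ?_)
    (tendsto_exp_neg_mul_sq_add_mul_abs_add hb (2 * (‖b‖ * ‖c‖)) (‖b‖ * ‖c‖ ^ 2))
  refine (intervalIntegral.norm_integral_le_of_norm_le_const fun t ht ↦ ?_).trans_eq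
    (by rw [sub_zero, abs_one, mul_one])
  rw [uIoc_of_le zero_le_one] at ht
  have norm_le : ‖t • c‖ ≤ ‖c‖ := by
    rw [norm_smul, Real.norm_of_nonneg ht.1.le]
    exact mul_le_of_le_one_left (norm_nonneg c) ht.2
  refine (norm_cexp_neg_mul_sq_add_le b (t • c) s).trans ?_
  gcongr

theorem integrable_cexp_neg_mul_sq_add (hb : 0 < b.re) (c : ℂ) :
    Integrable fun s : ℝ ↦ cexp (-b * (s + c) ^ 2) := by
  convert integrable_cexp_quadratic hb (-2 * b * c) (-b * c ^ 2) using 3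
  ring

theorem integral_Ioi_cexp_neg_mul_sq_add (hb : 0 < b.re) (c : ℂ) :
    ∫ s : ℝ in Ioi 0, cexp (-b * (s + c) ^ 2) =
      (π / b) ^ (1 / 2 : ℂ) / 2 - c * ∫ t : ℝ in 0..1, cexp (-b * (t * c) ^ 2) := by
  have shift := integral_Ioi_comp_add_of_tendsto (f := fun z ↦ cexp (-b * z ^ 2)) (by fun_prop) 0 c
    (integrable_cexp_neg_mul_sq hb).integrableOn (integrable_cexp_neg_mul_sq_add hb c).integrableOn
    (tendsto_integral_cexp_neg_mul_sq_add_smul hb c)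
  rw [integral_gaussian_complex_Ioi hb] at shift
  simpa only [ofReal_zero, zero_add, real_smul, smul_eq_mul] using shift

end ShiftedGaussian

/-- The Dawson function `D(u) = e^{-u²} ∫₀ᵘ e^{z²} dz`, extended to complex `u` by parametrizing the
segment from `0` to `u` as `z = t u` with `t ∈ [0, 1]`. -/
noncomputable def dawson (u : ℂ) : ℂ :=
  cexp (-u ^ 2) * u * ∫ t : ℝ in 0..1, cexp ((t : ℂ) ^ 2 * u ^ 2)

theorem dawson_conj (u : ℂ) : dawson (conj u) = conj (dawson u) := by
  simp only [dawson, map_mul, map_neg, map_pow, conj_ofReal, ← exp_conj,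
    ← intervalIntegral.intervalIntegral_conj]

theorem integral_Ioi_cexp_neg_sq_add_mul_eq_dawson {a : ℂ} (ha : 0 < a.re) (ha_sq : 0 < (a ^ 2).re)
    (u : ℂ) :
    ∫ s : ℝ in Ioi 0, cexp (-a ^ 2 * s ^ 2 + 2 * I * a * u * s) =
      (√π / 2 * cexp (-u ^ 2) + I * dawson u) / a := by
  have ha_ne : a ≠ 0 := ne_zero_of_re_pos ha
  have complete_square (s : ℝ) : cexp (-a ^ 2 * s ^ 2 + 2 * I * a * u * s) =
      cexp (-a ^ 2 * (s + -(I * u / a)) ^ 2) * cexp (-u ^ 2) := by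
    rw [← Complex.exp_add]
    congr 1
    field_simp
    linear_combination u ^ 2 * I_sq
  have on_segment (t : ℝ) :
      cexp (-a ^ 2 * (t * -(I * u / a)) ^ 2) = cexp ((t : ℂ) ^ 2 * u ^ 2) := by
    congr 1
    field_simp
    linear_combination (-t ^ 2 * u ^ 2) * I_sq
  have half_line : ((π : ℂ) / a ^ 2) ^ (1 / 2 : ℂ) = √π / a := by
    have re_pos : 0 < (√π / a : ℂ).re := by
      rw [div_eq_mul_inv, re_ofReal_mul, inv_re]
      have := normSq_pos.2 ha_ne
      positivity
    rw [one_div, ← sq_cpow_two_inv re_pos, div_pow, ← ofReal_pow, Real.sq_sqrt Real.pi_nonneg]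
  simp only [complete_square, integral_mul_const, integral_Ioi_cexp_neg_mul_sq_add ha_sq,
    on_segment, half_line, dawson]
  ring

section StieltjesTransform

variable {w : ℂ}

theorem integral_Ioi_cexp_I_mul (hw : 0 < w.im) :
    ∫ s : ℝ in Ioi 0, cexp (I * w * s) = I * w⁻¹ := by
  rw [integral_exp_mul_complex_Ioi (by simpa using hw)]
  simp [div_eq_mul_inv, mul_comm]

theorem integral_inv_sub_eq_integral_charFun (μ : Measure ℝ) [IsFiniteMeasure μ] (hw : 0 < w.im) :
    ∫ x : ℝ, (w - x)⁻¹ ∂μ = -I * ∫ s : ℝ in Ioi 0, cexp (I * w * s) * charFun μ (-s) := by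
  have laplace (x : ℝ) : (w - x)⁻¹ = -I * ∫ s : ℝ in Ioi 0, cexp (I * (w - x) * s) := by
    rw [integral_Ioi_cexp_I_mul (by simpa using hw), ← mul_assoc]
    simp
  have fourier (s : ℝ) :
      ∫ x : ℝ, cexp (I * (w - x) * s) ∂μ = cexp (I * w * s) * charFun μ (-s) := by
    rw [charFun_apply_real, ← integral_const_mul]
    congr with x
    rw [← Complex.exp_add]
    push_cast
    ring_nf
  have integrable : Integrable (Function.uncurry fun (x s : ℝ) ↦ cexp (I * (w - x) * s))
      (μ.prod (volume.restrict (Ioi 0))) := by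
    have decay : Integrable (fun s : ℝ ↦ Real.exp (-w.im * s)) (volume.restrict (Ioi 0)) :=
      integrableOn_exp_mul_Ioi (neg_lt_zero.2 hw) 0
    refine (decay.comp_snd μ).mono' (Continuous.aestronglyMeasurable ?_) (.of_forall fun p ↦ ?_)
    · unfold Function.uncurry
      fun_prop
    · simp [Function.uncurry, norm_exp]
  simp only [laplace, integral_const_mul, integral_integral_swap integrable, fourier]

theorem integral_inv_conj_sub (μ : Measure ℝ) (w : ℂ) :
    ∫ x : ℝ, (conj w - x)⁻¹ ∂μ = conj (∫ x : ℝ, (w - x)⁻¹ ∂μ) := by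
  simp only [← integral_conj, map_inv₀, map_sub, conj_ofReal]

variable (m : ℝ) {v : ℝ≥0}

theorem integral_inv_sub_gaussianReal_of_im_pos (hv : v ≠ 0) (hw : 0 < w.im) :
    ∫ x : ℝ, (w - x)⁻¹ ∂gaussianReal m v =
      √(2 / v) * dawson ((w - m) / √(2 * v)) -
        I * √(π / (2 * v)) * cexp (-(w - m) ^ 2 / (2 * v)) := by
  set r : ℝ := √(2 * v)
  have r_pos : 0 < r := Real.sqrt_pos.2 (by positivity)
  have r_ne : (r : ℂ) ≠ 0 := mod_cast r_pos.ne'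
  have r_sq : r ^ 2 = 2 * v := Real.sq_sqrt (by positivity)
  have r_sq_complex : (r : ℂ) ^ 2 = 2 * v := mod_cast r_sq
  have exponent (s : ℝ) : cexp (I * w * s) * charFun (gaussianReal m v) (-s) =
      cexp (-(r / 2 : ℝ) ^ 2 * s ^ 2 + 2 * I * (r / 2 : ℝ) * ((w - m) / r) * s) := by
    rw [charFun_gaussianReal, ← Complex.exp_add]
    congr 1
    push_cast
    field_simp
    linear_combination s ^ 2 * r_sq_complex
  have dawson_coeff : √(2 / v) = 2 / r := by
    rw [show (2 : ℝ) / v = 2 ^ 2 / (2 * v) by field_simp, Real.sqrt_div' _ (by positivity),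
      Real.sqrt_sq zero_le_two]
  have gaussian_coeff : √(π / (2 * v)) = √π / r := Real.sqrt_div' _ (by positivity)
  have half_line := integral_Ioi_cexp_neg_sq_add_mul_eq_dawson (a := (r / 2 : ℝ))
    (by rw [ofReal_re]; positivity) (by rw [← ofReal_pow, ofReal_re]; positivity) ((w - m) / r)
  simp only [integral_inv_sub_eq_integral_charFun _ hw, exponent, half_line, dawson_coeff,
    gaussian_coeff, neg_div, div_pow, r_sq_complex]
  push_cast
  field_simp
  linear_combination (-2) * dawson ((w - m) / r) * I_sq

theorem integral_inv_sub_gaussianReal_of_im_neg (hv : v ≠ 0) (hw : w.im < 0) :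
    ∫ x : ℝ, (w - x)⁻¹ ∂gaussianReal m v =
      √(2 / v) * dawson ((w - m) / √(2 * v)) +
        I * √(π / (2 * v)) * cexp (-(w - m) ^ 2 / (2 * v)) := by
  have upper := integral_inv_sub_gaussianReal_of_im_pos m hv (w := conj w) (by simpa using hw)
  rw [integral_inv_conj_sub] at upper
  apply (starRingEnd ℂ).injective
  simp only [upper, map_add, map_sub, map_mul, map_neg, map_div₀, map_pow, map_ofNat, conj_I,
    conj_ofReal, ← dawson_conj, ← exp_conj]
  ring

end StieltjesTransform

theorem integral_inv_sub_gaussianReal_inv {d : ℝ≥0} (hd : d ≠ 0) (w : ℂ) :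
    ∫ x : ℝ, (w - x)⁻¹ ∂gaussianReal 0 d⁻¹ =
      √(d / (2 * π)) * ∫ x : ℝ, (Real.exp (-(d * x ^ 2) / 2) : ℂ) / (w - x) := by
  have density (x : ℝ) : gaussianPDFReal 0 d⁻¹ x =
      √(d / (2 * π)) * Real.exp (-(d * x ^ 2) / 2) := by
    rw [gaussianPDFReal, ← Real.sqrt_inv]
    congr 2
    · rw [NNReal.coe_inv]
      field_simp
    · rw [NNReal.coe_inv, sub_zero]
      field_simp
  simp only [integral_gaussianReal_eq_integral_smul (inv_ne_zero hd), density, real_smul,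
    ofReal_mul, mul_assoc, integral_const_mul, div_eq_mul_inv (_ : ℂ)]

/-- Closed form of the Gaussian Stieltjes transform in terms of the (complex-extended)
Dawson function D(u) = e^{−u²}·u·∫₀¹ e^{t²u²} dt:
√(d/(2π))∫ e^{−dx²/2}/(w−x)dx = √(2d)·D(√(d/2)w) ∓ i√(πd/2)e^{−dw²/2} for ±Im w > 0. -/
theorem gaussian_resolvent_dawson
    (d : ℝ) (hd : 0 < d) (D : ℂ → ℂ)
    (hD : ∀ u : ℂ, D u =
      Complex.exp (-u ^ 2) * u * ∫ t : ℝ in (0 : ℝ)..1, Complex.exp ((t : ℂ) ^ 2 * u ^ 2)) :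
    ∀ w : ℂ,
      (0 < w.im →
        (Real.sqrt (d / (2 * Real.pi)) : ℂ) *
            (∫ x : ℝ, (Real.exp (-(d * x ^ 2) / 2) : ℂ) / (w - (x : ℂ))) =
          (Real.sqrt (2 * d) : ℂ) * D ((Real.sqrt (d / 2) : ℂ) * w) -
            Complex.I * (Real.sqrt (Real.pi * d / 2) : ℂ) * Complex.exp (-(d : ℂ) * w ^ 2 / 2)) ∧
      (w.im < 0 →
        (Real.sqrt (d / (2 * Real.pi)) : ℂ) *
            (∫ x : ℝ, (Real.exp (-(d * x ^ 2) / 2) : ℂ) / (w - (x : ℂ))) =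
          (Real.sqrt (2 * d) : ℂ) * D ((Real.sqrt (d / 2) : ℂ) * w) +
            Complex.I * (Real.sqrt (Real.pi * d / 2) : ℂ) * Complex.exp (-(d : ℂ) * w ^ 2 / 2)) := by
  lift d to ℝ≥0 using hd.le
  have hd0 : d ≠ 0 := by exact_mod_cast hd.ne'
  obtain rfl : D = dawson := funext hD
  intro w
  have dawson_arg : (w - (0 : ℝ)) / √(2 * (d⁻¹ : ℝ≥0)) = √(d / 2) * w := by
    rw [NNReal.coe_inv, ← div_eq_mul_inv, ← inv_div (d : ℝ) 2, Real.sqrt_inv, ofReal_inv,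
      div_inv_eq_mul, ofReal_zero, sub_zero, mul_comm]
  have gaussian_arg : -(w - (0 : ℝ)) ^ 2 / (2 * (d⁻¹ : ℝ≥0)) = -(d : ℝ) * w ^ 2 / 2 := by
    push_cast
    field_simp
    ring
  have dawson_coeff : 2 / ((d⁻¹ : ℝ≥0) : ℝ) = 2 * d := by
    rw [NNReal.coe_inv, div_inv_eq_mul]
  have gaussian_coeff : π / (2 * (d⁻¹ : ℝ≥0)) = π * d / 2 := by
    rw [NNReal.coe_inv]
    field_simp
  rw [← integral_inv_sub_gaussianReal_inv hd0, ← dawson_arg, ← gaussian_arg, ← dawson_coeff,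
    ← gaussian_coeff]
  exact ⟨integral_inv_sub_gaussianReal_of_im_pos 0 (inv_ne_zero hd0),
    integral_inv_sub_gaussianReal_of_im_neg 0 (inv_ne_zero hd0)⟩
end

section
/- Let d > 1 be real, β > 0, and ω > 0 satisfy ω·β < π and ω = √(1 − 1/d)·cos(ωβ/2). Define J(τ₁, τ₂) = 2·log(cos(ωβ/2)) − 2·log(cos(ω·(τ₁ − τ₂ − β/2))) for 0 ≤ τ₂ ≤ τ₁ ≤ β. Then: (i) ∂²J/∂τ₁∂τ₂ = −2·(1 − 1/d)·e^{J(τ₁,τ₂)} on the open domain 0 < τ₂ < τ₁ < β, and (ii) J satisfies the boundary conditions J(τ, τ) = 0 and J(β, 0) = 0. -/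
/-!
`J` depends on `s = τ₁ - τ₂` only, so `∂₁∂₂J = -J''(s)` and the equation of motion becomes the ODE
`J'' = 2 (1 - 1/d) e^J`. Differentiating `-2 log cos (ω (s - β/2))` twice gives
`2 ω² / cos² (ω (s - β/2))`, and the saddle condition `ω = √(1 - 1/d) cos (ω β / 2)` is exactly
what turns `ω² / cos²` into `(1 - 1/d) e^J`.
-/

open Topology

/-- The saddle `J(τ₁, τ₂)` as a function of the time difference `s = τ₁ - τ₂`, so that
`e^J = cos² (ω β / 2) / cos² (ω (s - β / 2))`. As `Real.log x = log |x|`, this formula for `e^J`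
holds wherever the two cosines do not vanish, whatever their signs. -/
noncomputable def saddleProfile (ω β s : ℝ) : ℝ :=
  2 * Real.log (Real.cos (ω * β / 2)) - 2 * Real.log (Real.cos (ω * (s - β / 2)))

theorem hasDerivAt_const_mul_sub_const (a b x : ℝ) :
    HasDerivAt (fun y => a * (y - b)) a x := by
  simpa only [mul_one] using ((hasDerivAt_id' x).sub_const b).const_mul a

theorem hasDerivAt_deriv_comp_sub {𝕜 F : Type*} [NontriviallyNormedField 𝕜]
    [NormedAddCommGroup F] [NormedSpace 𝕜 F] {f : 𝕜 → F} {f'' : F} {x y : 𝕜}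
    (hf : HasDerivAt (deriv f) f'' (x - y)) :
    HasDerivAt (fun t₂ => deriv (fun t₁ => f (t₁ - t₂)) x) (-f'') y := by
  simpa only [deriv_comp_sub_const] using hf.comp_const_sub x y

theorem exp_two_mul_log_sub_two_mul_log {a b : ℝ} (ha : a ≠ 0) (hb : b ≠ 0) :
    Real.exp (2 * Real.log a - 2 * Real.log b) = a ^ 2 / b ^ 2 := by
  have exp_two_mul_log {x : ℝ} (hx : x ≠ 0) : Real.exp (2 * Real.log x) = x ^ 2 := by
    rw [two_mul, Real.exp_add, Real.exp_log_eq_abs hx, abs_mul_abs_self, sq]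
  rw [Real.exp_sub, exp_two_mul_log ha, exp_two_mul_log hb]

theorem sq_sqrt_one_sub_one_div {d : ℝ} (hd : 1 ≤ d) : √(1 - 1 / d) ^ 2 = 1 - 1 / d :=
  Real.sq_sqrt (sub_nonneg.mpr ((one_div d).trans_le (inv_le_one_of_one_le₀ hd)))

theorem cos_mul_sub_half_pos {ω β s : ℝ} (hω : 0 < ω) (hωβ : ω * β < Real.pi)
    (hs : s ∈ Set.Ioo 0 β) : 0 < Real.cos (ω * (s - β / 2)) := by
  have hs_pos : 0 < ω * s := mul_pos hω hs.1
  have hs_lt : ω * s < ω * β := mul_lt_mul_of_pos_left hs.2 hω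
  apply Real.cos_pos_of_mem_Ioo
  constructor <;> linarith

theorem cos_ne_zero_of_eq_mul_cos {κ β ω : ℝ} (hsaddle : ω = κ * Real.cos (ω * β / 2)) :
    Real.cos (ω * β / 2) ≠ 0 := by
  intro hcos
  have hω : ω = 0 := by rw [hsaddle, hcos, mul_zero]
  simp [hω] at hcos

section saddleProfile

variable {κ ω β s : ℝ}

theorem saddleProfile_zero_right (ω β : ℝ) : saddleProfile ω β 0 = 0 := by
  rw [saddleProfile, show ω * (0 - β / 2) = -(ω * β / 2) by ring, Real.cos_neg, sub_self]

theorem saddleProfile_self_right (ω β : ℝ) : saddleProfile ω β β = 0 := by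
  rw [saddleProfile, sub_half, mul_div_assoc, sub_self]

theorem hasDerivAt_saddleProfile (hs : Real.cos (ω * (s - β / 2)) ≠ 0) :
    HasDerivAt (saddleProfile ω β) (2 * ω * Real.tan (ω * (s - β / 2))) s := by
  have hlog : HasDerivAt (fun t => Real.log (Real.cos (ω * (t - β / 2))))
      (-Real.sin (ω * (s - β / 2)) * ω / Real.cos (ω * (s - β / 2))) s :=
    (hasDerivAt_const_mul_sub_const ω (β / 2) s).cos.log hs
  refine ((hlog.const_mul 2).const_sub _).congr_deriv ?_
  rw [Real.tan_eq_sin_div_cos]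
  ring

theorem hasDerivAt_deriv_saddleProfile (hs : Real.cos (ω * (s - β / 2)) ≠ 0) :
    HasDerivAt (deriv (saddleProfile ω β)) (2 * (ω ^ 2 / Real.cos (ω * (s - β / 2)) ^ 2)) s := by
  have hcos_near : ∀ᶠ t in 𝓝 s, Real.cos (ω * (t - β / 2)) ≠ 0 :=
    (hasDerivAt_const_mul_sub_const ω (β / 2) s).cos.continuousAt.eventually_ne hs
  have hderiv_near : deriv (saddleProfile ω β) =ᶠ[𝓝 s]
      fun t => 2 * ω * Real.tan (ω * (t - β / 2)) :=
    hcos_near.mono fun t ht => (hasDerivAt_saddleProfile ht).deriv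
  have htan : HasDerivAt (fun t => 2 * ω * Real.tan (ω * (t - β / 2)))
      (2 * ω * (1 / Real.cos (ω * (s - β / 2)) ^ 2 * ω)) s :=
    ((Real.hasDerivAt_tan hs).comp s
      (hasDerivAt_const_mul_sub_const ω (β / 2) s)).const_mul (2 * ω)
  exact (htan.congr_of_eventuallyEq hderiv_near).congr_deriv (by ring)

theorem hasDerivAt_deriv_saddleProfile_of_eq_mul_cos
    (hsaddle : ω = κ * Real.cos (ω * β / 2)) (hs : Real.cos (ω * (s - β / 2)) ≠ 0) :
    HasDerivAt (deriv (saddleProfile ω β)) (2 * κ ^ 2 * Real.exp (saddleProfile ω β s)) s := by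
  have hω_sq : ω ^ 2 = κ ^ 2 * Real.cos (ω * β / 2) ^ 2 := by
    rw [← mul_pow, ← hsaddle]
  have hexp : Real.exp (saddleProfile ω β s) =
      Real.cos (ω * β / 2) ^ 2 / Real.cos (ω * (s - β / 2)) ^ 2 :=
    exp_two_mul_log_sub_two_mul_log (cos_ne_zero_of_eq_mul_cos hsaddle) hs
  refine (hasDerivAt_deriv_saddleProfile hs).congr_deriv ?_
  rw [hexp, hω_sq]
  ring

end saddleProfile

theorem liouville_saddle_general (κ β ω : ℝ) (hsaddle : ω = κ * Real.cos (ω * β / 2)) :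
    let J : ℝ → ℝ → ℝ := fun τ₁ τ₂ => saddleProfile ω β (τ₁ - τ₂)
    (∀ τ₁ τ₂ : ℝ, Real.cos (ω * (τ₁ - τ₂ - β / 2)) ≠ 0 →
        HasDerivAt (fun t₂ => deriv (fun t₁ => J t₁ t₂) τ₁)
          (-2 * κ ^ 2 * Real.exp (J τ₁ τ₂)) τ₂) ∧
      (∀ τ : ℝ, J τ τ = 0) ∧ J β 0 = 0 := by
  intro J
  refine ⟨fun τ₁ τ₂ hcos => ?_, fun τ => ?_, ?_⟩
  · simpa only [neg_mul] using
      hasDerivAt_deriv_comp_sub (hasDerivAt_deriv_saddleProfile_of_eq_mul_cos hsaddle hcos)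
  · simpa only [J, sub_self] using saddleProfile_zero_right ω β
  · simpa only [J, sub_zero] using saddleProfile_self_right ω β

/-- The homogeneous translation-invariant saddle of the coarse-grained path integral of the
d-commuting SYK model at q → 1: J(τ₁,τ₂) = 2log cos(ωβ/2) − 2log cos(ω(τ₁−τ₂−β/2)) solves
the Liouville-like equation ∂₁∂₂J = −2(1−1/d)e^J with boundary conditions
J(τ,τ) = J(β,0) = 0. -/
theorem liouville_saddle
    (d β ω : ℝ) (hd : 1 < d) (hβ : 0 < β) (hω : 0 < ω)
    (hωβ : ω * β < Real.pi)
    (hsaddle : ω = Real.sqrt (1 - 1 / d) * Real.cos (ω * β / 2)) :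
    let J : ℝ → ℝ → ℝ := fun τ₁ τ₂ =>
      2 * Real.log (Real.cos (ω * β / 2)) - 2 * Real.log (Real.cos (ω * (τ₁ - τ₂ - β / 2)))
    (∀ τ₁ τ₂ : ℝ, 0 < τ₂ → τ₂ < τ₁ → τ₁ < β →
        deriv (fun t₂ => deriv (fun t₁ => J t₁ t₂) τ₁) τ₂ =
          -2 * (1 - 1 / d) * Real.exp (J τ₁ τ₂)) ∧
      (∀ τ ∈ Set.Icc (0 : ℝ) β, J τ τ = 0) ∧ J β 0 = 0 := by
  obtain ⟨heom, hdiag, hcorner⟩ := liouville_saddle_general (√(1 - 1 / d)) β ω hsaddle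
  rw [sq_sqrt_one_sub_one_div hd.le] at heom
  exact ⟨fun τ₁ τ₂ h₀ h h₁ => (heom τ₁ τ₂ (cos_mul_sub_half_pos hω hωβ
    ⟨sub_pos.mpr h, by linarith⟩).ne').deriv, fun τ _ => hdiag τ, hcorner⟩
end

section
/- Let β > 0 and x ∈ (0, π), and set ω = x/β. Define J(u) = 2·log(cos(x/2)) − 2·log(cos(ω·(u − β/2))) for u ∈ [0, β]. Then the on-shell action integral evaluates to ∫_0^β ∫_0^τ (1 − J(τ − τ′)/2)·e^{J(τ − τ′)} dτ′ dτ = β²·( sin x / x − (1/2)·cos²(x/2) ). -/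
/-!
The kernel `g u = (1 - J u / 2) * exp (J u)` satisfies `g (β - u) = g u`, so its primitive
`G τ = ∫ u in 0..τ, g u` satisfies `G τ + G (β - τ) = G β`, and the double integral
`∫ τ in 0..β, G τ` is `β / 2 * G β`. In the angle `θ = ω (u - β / 2)` the kernel is
`cos (x / 2) ^ 2 * (1 - log (cos (x / 2)) + log (cos θ)) / cos θ ^ 2`, which has the elementary
primitive `cos (x / 2) ^ 2 * ((2 - log (cos (x / 2)) + log (cos θ)) * tan θ - θ)`.
-/

open Real Set intervalIntegral
open MeasureTheory (volume)

section Triangle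

variable {E : Type*} [NormedAddCommGroup E] [NormedSpace ℝ E]

theorem integral_add_integral_reflect_of_symm {f : ℝ → E} {a b t : ℝ}
    (hf : IntervalIntegrable f volume a b) (hsymm : ∀ u, f (a + b - u) = f u)
    (ht : t ∈ uIcc a b) :
    (∫ u in a..t, f u) + ∫ u in a..(a + b - t), f u = ∫ u in a..b, f u := by
  have hreflect : ∫ u in a..(a + b - t), f u = ∫ u in t..b, f u := by
    simpa [hsymm] using integral_comp_sub_left (a := a) (b := a + b - t) f (a + b)
  rw [hreflect]
  exact integral_add_adjacent_intervals
    (hf.mono_set (uIcc_subset_uIcc_left ht)) (hf.mono_set (uIcc_subset_uIcc_right ht))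

variable [CompleteSpace E]

theorem integral_integral_of_symm {f : ℝ → E} {a b : ℝ}
    (hf : IntervalIntegrable f volume a b) (hsymm : ∀ u, f (a + b - u) = f u) :
    ∫ t in a..b, ∫ u in a..t, f u = ((b - a) / 2) • ∫ u in a..b, f u := by
  have hG : IntervalIntegrable (fun t ↦ ∫ u in a..t, f u) volume a b :=
    (continuousOn_primitive_interval' hf left_mem_uIcc).intervalIntegrable
  have hG_reflect : IntervalIntegrable (fun t ↦ ∫ u in a..(a + b - t), f u) volume a b := by
    simpa using (hG.comp_sub_left (a + b)).symm
  have hreflect : ∫ t in a..b, ∫ u in a..(a + b - t), f u = ∫ t in a..b, ∫ u in a..t, f u := by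
    simpa using integral_comp_sub_left (a := a) (b := b) (fun t ↦ ∫ u in a..t, f u) (a + b)
  have hdouble : (2 : ℝ) • ∫ t in a..b, ∫ u in a..t, f u = (b - a) • ∫ u in a..b, f u :=
    calc (2 : ℝ) • ∫ t in a..b, ∫ u in a..t, f u
        = ∫ t in a..b, ((∫ u in a..t, f u) + ∫ u in a..(a + b - t), f u) := by
          rw [integral_add hG hG_reflect, hreflect, two_smul]
      _ = ∫ _ in a..b, ∫ u in a..b, f u :=
          integral_congr fun _ ht ↦ integral_add_integral_reflect_of_symm hf hsymm ht
      _ = (b - a) • ∫ u in a..b, f u := integral_const _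
  rw [div_eq_inv_mul, mul_smul, ← hdouble, inv_smul_smul₀ two_ne_zero]

theorem integral_integral_comp_of_even {g : ℝ → E} {b x : ℝ} (hb : b ≠ 0) (hx : x ≠ 0)
    (hg : IntervalIntegrable g volume (-(x / 2)) (x / 2)) (heven : g.Even) :
    ∫ t in 0..b, ∫ s in 0..t, g (x / b * (t - s - b / 2)) =
      (b ^ 2 / (2 * x)) • ∫ θ in -(x / 2)..(x / 2), g θ := by
  have hω : x / b ≠ 0 := div_ne_zero hx hb
  have hleft : -(x / 2) / (x / b) + b / 2 = 0 := by field_simp; ring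
  have hright : x / 2 / (x / b) + b / 2 = b := by field_simp; ring
  have hinteg : IntervalIntegrable (fun u ↦ g (x / b * (u - b / 2))) volume 0 b := by
    simpa only [hleft, hright] using (hg.comp_mul_left (c := x / b)).comp_sub_right (b / 2)
  have hsymm (u : ℝ) : g (x / b * (0 + b - u - b / 2)) = g (x / b * (u - b / 2)) := by
    rw [← heven]
    congr 1
    ring
  have hconv (t : ℝ) : ∫ s in 0..t, g (x / b * (t - s - b / 2)) =
      ∫ u in 0..t, g (x / b * (u - b / 2)) := by
    simpa using integral_comp_sub_left (a := 0) (b := t) (fun u ↦ g (x / b * (u - b / 2))) t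
  have hrescale : ∫ u in 0..b, g (x / b * (u - b / 2)) =
      (b / x) • ∫ θ in -(x / 2)..(x / 2), g θ := by
    rw [integral_comp_sub_right (fun v ↦ g (x / b * v)), integral_comp_mul_left g hω, inv_div]
    congr 2 <;> field_simp <;> ring
  simp only [hconv]
  rw [integral_integral_of_symm hinteg hsymm, hrescale, smul_smul]
  congr 1
  ring

end Triangle

theorem hasDerivAt_add_log_cos_mul_tan_sub_id {θ : ℝ} (a : ℝ) (hθ : cos θ ≠ 0) :
    HasDerivAt (fun θ ↦ (1 + a + log (cos θ)) * tan θ - θ) ((a + log (cos θ)) / cos θ ^ 2) θ := by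
  have hlog : HasDerivAt (fun θ ↦ 1 + a + log (cos θ)) (-sin θ / cos θ) θ :=
    ((hasDerivAt_cos θ).log hθ).const_add (1 + a)
  refine ((hlog.mul (hasDerivAt_tan hθ)).sub (hasDerivAt_id θ)).congr_deriv ?_
  rw [tan_eq_sin_div_cos]
  field_simp
  linear_combination -sin_sq_add_cos_sq θ

theorem continuousOn_add_log_cos_div_cos_sq {s : Set ℝ} (a : ℝ) (hs : ∀ θ ∈ s, cos θ ≠ 0) :
    ContinuousOn (fun θ ↦ (a + log (cos θ)) / cos θ ^ 2) s :=
  (continuousOn_const.add (continuousOn_cos.log hs)).div (continuousOn_cos.pow 2)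
    fun θ hθ ↦ pow_ne_zero 2 (hs θ hθ)

theorem integral_add_log_cos_div_cos_sq {p q : ℝ} (a : ℝ) (hcos : ∀ θ ∈ uIcc p q, cos θ ≠ 0) :
    ∫ θ in p..q, (a + log (cos θ)) / cos θ ^ 2 =
      ((1 + a + log (cos q)) * tan q - q) - ((1 + a + log (cos p)) * tan p - p) :=
  integral_eq_sub_of_hasDerivAt
    (fun θ hθ ↦ hasDerivAt_add_log_cos_mul_tan_sub_id a (hcos θ hθ))
    (continuousOn_add_log_cos_div_cos_sq a hcos).intervalIntegrable

/-- The saddle exponent `J`, as a function of the angle `θ = ω (u - β / 2)` and of the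
normalization `c = cos (x / 2)` that makes it vanish at the endpoints `u = 0` and `u = β`. -/
noncomputable def saddleExponent (c θ : ℝ) : ℝ :=
  2 * log c - 2 * log (cos θ)

/-- The integrand `(1 - J / 2) * exp J` of the coarse-grained action, evaluated on the saddle. -/
noncomputable def saddleLagrangian (c θ : ℝ) : ℝ :=
  (1 - saddleExponent c θ / 2) * exp (saddleExponent c θ)

theorem even_saddleLagrangian (c : ℝ) : (saddleLagrangian c).Even := fun θ ↦ by
  simp only [saddleLagrangian, saddleExponent, cos_neg]

theorem exp_saddleExponent {c θ : ℝ} (hc : c ≠ 0) (hθ : cos θ ≠ 0) :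
    exp (saddleExponent c θ) = c ^ 2 / cos θ ^ 2 := by
  have exp_two_mul_log {z : ℝ} (hz : z ≠ 0) : exp (2 * log z) = z ^ 2 := by
    rw [two_mul, exp_add, exp_log_eq_abs hz, abs_mul_abs_self, sq]
  rw [saddleExponent, exp_sub, exp_two_mul_log hc, exp_two_mul_log hθ]

theorem saddleLagrangian_eq {c θ : ℝ} (hc : c ≠ 0) (hθ : cos θ ≠ 0) :
    saddleLagrangian c θ = c ^ 2 * ((1 - log c + log (cos θ)) / cos θ ^ 2) := by
  rw [saddleLagrangian, exp_saddleExponent hc hθ, saddleExponent]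
  ring

theorem intervalIntegrable_saddleLagrangian {c p q : ℝ} (hc : c ≠ 0)
    (hcos : ∀ θ ∈ uIcc p q, cos θ ≠ 0) :
    IntervalIntegrable (saddleLagrangian c) volume p q :=
  ((continuousOn_add_log_cos_div_cos_sq (1 - log c) hcos).const_mul (c ^ 2) |>.congr
    fun _ hθ ↦ saddleLagrangian_eq hc (hcos _ hθ)).intervalIntegrable

theorem integral_saddleLagrangian_cos {y : ℝ} (hcos : ∀ θ ∈ uIcc (-y) y, cos θ ≠ 0) :
    ∫ θ in -y..y, saddleLagrangian (cos y) θ = 2 * sin (2 * y) - 2 * y * cos y ^ 2 := by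
  have hc : cos y ≠ 0 := hcos y right_mem_uIcc
  rw [integral_congr fun θ hθ ↦ saddleLagrangian_eq hc (hcos θ hθ), integral_const_mul,
    integral_add_log_cos_div_cos_sq _ hcos, cos_neg, tan_neg, tan_eq_sin_div_cos, sin_two_mul]
  field_simp
  ring

/-- The on-shell value of the coarse-grained action on the SYK-type saddle
e^{J(u)} = cos²(x/2)/cos²(ω(u−β/2)) with ω = x/β:
∫₀^β ∫₀^τ (1 − J/2)e^J dτ′dτ = β²(sin x/x − ½cos²(x/2)). -/
theorem onshell_action_value
    (β x : ℝ) (hβ : 0 < β) (hx : x ∈ Set.Ioo 0 Real.pi) :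
    let ω := x / β
    let J : ℝ → ℝ := fun u =>
      2 * Real.log (Real.cos (x / 2)) - 2 * Real.log (Real.cos (ω * (u - β / 2)))
    (∫ τ in (0 : ℝ)..β, ∫ τ' in (0 : ℝ)..τ,
        (1 - J (τ - τ') / 2) * Real.exp (J (τ - τ'))) =
      β ^ 2 * (Real.sin x / x - (1 / 2) * Real.cos (x / 2) ^ 2) := by
  intro ω J
  have hx0 : x ≠ 0 := hx.1.ne'
  have hcos : ∀ θ ∈ uIcc (-(x / 2)) (x / 2), cos θ ≠ 0 := fun θ hθ ↦ by
    rw [uIcc_of_le (by linarith [hx.1])] at hθ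
    exact (cos_pos_of_mem_Ioo ⟨by linarith [hθ.1, hx.2], by linarith [hθ.2, hx.2]⟩).ne'
  have hinteg : IntervalIntegrable (saddleLagrangian (cos (x / 2))) volume (-(x / 2)) (x / 2) :=
    intervalIntegrable_saddleLagrangian (hcos _ right_mem_uIcc) hcos
  calc ∫ τ in (0 : ℝ)..β, ∫ τ' in (0 : ℝ)..τ, (1 - J (τ - τ') / 2) * exp (J (τ - τ'))
      = (β ^ 2 / (2 * x)) • ∫ θ in -(x / 2)..(x / 2), saddleLagrangian (cos (x / 2)) θ :=
        integral_integral_comp_of_even hβ.ne' hx0 hinteg (even_saddleLagrangian _)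
    _ = β ^ 2 / (2 * x) * (2 * sin x - x * cos (x / 2) ^ 2) := by
        rw [integral_saddleLagrangian_cos hcos, mul_div_cancel₀ x two_ne_zero, smul_eq_mul]
    _ = β ^ 2 * (sin x / x - 1 / 2 * cos (x / 2) ^ 2) := by
        field_simp
end

section
/- Let x ∈ (0, π) and n ∈ ℝ, and set k = n/(2x). Define on (0, π): f₊(θ) = cot θ·sin(k(π/2 − θ)) + k·cos(k(π/2 − θ)) and f₋(θ) = cot θ·cos(k(π/2 − θ)) − k·sin(k(π/2 − θ)). Then both f₊ and f₋ satisfy the h = 2 eigenvalue equation −f″(θ) + (2/sin²θ)·f(θ) = k²·f(θ) for all θ ∈ (0, π). -/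
/-!
The function `cot` solves the Riccati equation `W' + W ^ 2 = -1`, so the first-order operator
`g ↦ cot * g - g'` intertwines the free operator `-∂²` with `-∂² + 2 / sin ^ 2`. Hence it sends
each solution of `-g'' = k ^ 2 * g` to a solution of the `h = 2` equation with the same eigenvalue,
and `f₊`, `f₋` are the images of the sine and cosine of `k * (π / 2 - θ)`.
-/

open Topology

section Darboux

variable {𝕜 : Type*} [NontriviallyNormedField 𝕜]

/-- The Darboux transform of `g` with superpotential `W`. When `W' + W ^ 2 = V - μ`, it carries
solutions of `-g'' + V * g = lam * g` to solutions of the partner equation, whose potential is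
`V - 2 * W' = 2 * (W ^ 2 + μ) - V`. -/
noncomputable def darbouxTransform (W g : 𝕜 → 𝕜) : 𝕜 → 𝕜 :=
  fun t => W t * g t - deriv g t

variable {V W g : 𝕜 → 𝕜} {lam μ θ : 𝕜}

theorem hasDerivAt_darbouxTransform
    (hW : HasDerivAt W (V θ - μ - W θ ^ 2) θ) (hg : DifferentiableAt 𝕜 g θ)
    (hg' : HasDerivAt (deriv g) ((V θ - lam) * g θ) θ) :
    HasDerivAt (darbouxTransform W g) ((lam - μ) * g θ - W θ * darbouxTransform W g θ) θ := by
  refine ((hW.fun_mul hg.hasDerivAt).fun_sub hg').congr_deriv ?_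
  rw [darbouxTransform]
  ring

theorem hasDerivAt_deriv_darbouxTransform
    (hW : ∀ᶠ t in 𝓝 θ, HasDerivAt W (V t - μ - W t ^ 2) t)
    (hg : ∀ᶠ t in 𝓝 θ, DifferentiableAt 𝕜 g t)
    (hg' : ∀ᶠ t in 𝓝 θ, HasDerivAt (deriv g) ((V t - lam) * g t) t) :
    HasDerivAt (deriv (darbouxTransform W g))
      ((2 * (W θ ^ 2 + μ) - V θ - lam) * darbouxTransform W g θ) θ := by
  have deriv_eq : deriv (darbouxTransform W g) =ᶠ[𝓝 θ]
      fun t => (lam - μ) * g t - W t * darbouxTransform W g t := by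
    filter_upwards [hW, hg, hg'] with t hWt hgt hgt'
    exact (hasDerivAt_darbouxTransform hWt hgt hgt').deriv
  have hf := hasDerivAt_darbouxTransform hW.self_of_nhds hg.self_of_nhds hg'.self_of_nhds
  refine HasDerivAt.congr_of_eventuallyEq ?_ deriv_eq
  refine ((hg.self_of_nhds.hasDerivAt.const_mul (lam - μ)).fun_sub
    (hW.self_of_nhds.fun_mul hf)).congr_deriv ?_
  simp only [darbouxTransform]
  ring

end Darboux

section Cot

variable {θ : ℝ}

theorem one_add_cot_sq (hθ : Real.sin θ ≠ 0) : 1 + Real.cot θ ^ 2 = 1 / Real.sin θ ^ 2 := by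
  rw [Real.cot_eq_cos_div_sin]
  field_simp
  exact Real.sin_sq_add_cos_sq θ

theorem hasDerivAt_cot (hθ : Real.sin θ ≠ 0) :
    HasDerivAt Real.cot (-1 - Real.cot θ ^ 2) θ := by
  rw [funext Real.cot_eq_cos_div_sin]
  refine ((Real.hasDerivAt_cos θ).fun_div (Real.hasDerivAt_sin θ) hθ).congr_deriv ?_
  field_simp

theorem darbouxTransform_cot_eigenvalue_eq {g : ℝ → ℝ} {lam : ℝ} (hθ : Real.sin θ ≠ 0)
    (hg : ∀ᶠ t in 𝓝 θ, DifferentiableAt ℝ g t)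
    (hg' : ∀ᶠ t in 𝓝 θ, HasDerivAt (deriv g) (-lam * g t) t) :
    -(deriv (deriv (darbouxTransform Real.cot g)) θ) +
        2 / Real.sin θ ^ 2 * darbouxTransform Real.cot g θ =
      lam * darbouxTransform Real.cot g θ := by
  have riccati : ∀ᶠ t in 𝓝 θ, HasDerivAt Real.cot (0 - 1 - Real.cot t ^ 2) t := by
    filter_upwards [Real.continuous_sin.continuousAt.eventually_ne hθ] with t ht
    simpa only [zero_sub] using hasDerivAt_cot ht
  have free_eq : ∀ᶠ t in 𝓝 θ, HasDerivAt (deriv g) ((0 - lam) * g t) t := by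
    simpa only [zero_sub] using hg'
  have potential_eq : 2 / Real.sin θ ^ 2 = 2 * (Real.cot θ ^ 2 + 1) := by
    rw [add_comm, one_add_cot_sq hθ, mul_one_div]
  rw [(hasDerivAt_deriv_darbouxTransform (V := fun _ => 0) riccati hg free_eq).deriv,
    potential_eq]
  ring

end Cot

section PlaneWaves

variable (k a : ℝ)

theorem hasDerivAt_sin_mul_const_sub (t : ℝ) :
    HasDerivAt (fun t => Real.sin (k * (a - t))) (-k * Real.cos (k * (a - t))) t :=
  (((hasDerivAt_id t).const_sub a).const_mul k).sin.congr_deriv (by simp only [id]; ring)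

theorem hasDerivAt_cos_mul_const_sub (t : ℝ) :
    HasDerivAt (fun t => Real.cos (k * (a - t))) (k * Real.sin (k * (a - t))) t :=
  (((hasDerivAt_id t).const_sub a).const_mul k).cos.congr_deriv (by simp only [id]; ring)

theorem deriv_sin_mul_const_sub :
    deriv (fun t => Real.sin (k * (a - t))) = fun t => -k * Real.cos (k * (a - t)) :=
  deriv_eq (hasDerivAt_sin_mul_const_sub k a)

theorem deriv_cos_mul_const_sub :
    deriv (fun t => Real.cos (k * (a - t))) = fun t => k * Real.sin (k * (a - t)) :=
  deriv_eq (hasDerivAt_cos_mul_const_sub k a)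

theorem hasDerivAt_deriv_sin_mul_const_sub (t : ℝ) :
    HasDerivAt (deriv fun t => Real.sin (k * (a - t))) (-k ^ 2 * Real.sin (k * (a - t))) t := by
  rw [deriv_sin_mul_const_sub]
  exact ((hasDerivAt_cos_mul_const_sub k a t).const_mul (-k)).congr_deriv (by ring)

theorem hasDerivAt_deriv_cos_mul_const_sub (t : ℝ) :
    HasDerivAt (deriv fun t => Real.cos (k * (a - t))) (-k ^ 2 * Real.cos (k * (a - t))) t := by
  rw [deriv_cos_mul_const_sub]
  exact ((hasDerivAt_sin_mul_const_sub k a t).const_mul k).congr_deriv (by ring)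

theorem darbouxTransform_cot_sin_mul_const_sub :
    darbouxTransform Real.cot (fun t => Real.sin (k * (a - t))) = fun t =>
      Real.cos t / Real.sin t * Real.sin (k * (a - t)) + k * Real.cos (k * (a - t)) := by
  funext t
  rw [darbouxTransform, deriv_sin_mul_const_sub, Real.cot_eq_cos_div_sin]
  ring

theorem darbouxTransform_cot_cos_mul_const_sub :
    darbouxTransform Real.cot (fun t => Real.cos (k * (a - t))) = fun t =>
      Real.cos t / Real.sin t * Real.cos (k * (a - t)) - k * Real.sin (k * (a - t)) := by
  funext t
  rw [darbouxTransform, deriv_cos_mul_const_sub, Real.cot_eq_cos_div_sin]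

end PlaneWaves

theorem h_eq_two_eigenfunctions_general (k : ℝ) {θ : ℝ} (hθ : Real.sin θ ≠ 0) :
    let fp : ℝ → ℝ := fun θ =>
      Real.cos θ / Real.sin θ * Real.sin (k * (Real.pi / 2 - θ)) +
        k * Real.cos (k * (Real.pi / 2 - θ))
    let fm : ℝ → ℝ := fun θ =>
      Real.cos θ / Real.sin θ * Real.cos (k * (Real.pi / 2 - θ)) -
        k * Real.sin (k * (Real.pi / 2 - θ))
    (-(deriv (deriv fp) θ) + 2 / (Real.sin θ) ^ 2 * fp θ = k ^ 2 * fp θ) ∧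
      (-(deriv (deriv fm) θ) + 2 / (Real.sin θ) ^ 2 * fm θ = k ^ 2 * fm θ) := by
  intro fp fm
  have hfp : darbouxTransform Real.cot _ = fp := darbouxTransform_cot_sin_mul_const_sub k _
  have hfm : darbouxTransform Real.cot _ = fm := darbouxTransform_cot_cos_mul_const_sub k _
  rw [← hfp, ← hfm]
  constructor
  · exact darbouxTransform_cot_eigenvalue_eq hθ
      (.of_forall fun t => (hasDerivAt_sin_mul_const_sub k _ t).differentiableAt)
      (.of_forall (hasDerivAt_deriv_sin_mul_const_sub k _))
  · exact darbouxTransform_cot_eigenvalue_eq hθ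
      (.of_forall fun t => (hasDerivAt_cos_mul_const_sub k _ t).differentiableAt)
      (.of_forall (hasDerivAt_deriv_cos_mul_const_sub k _))

/-- The h = 2 fluctuation eigenfunctions of the coarse-grained d-commuting SYK action:
f₊(θ) = cot θ·sin(k(π/2−θ)) + k·cos(k(π/2−θ)) and
f₋(θ) = cot θ·cos(k(π/2−θ)) − k·sin(k(π/2−θ)), with k = n/(2x), both satisfy
−f″ + (2/sin²θ)f = k²f on (0, π). -/
theorem h_eq_two_eigenfunctions
    (x n : ℝ) (hx : x ∈ Set.Ioo 0 Real.pi) :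
    let k := n / (2 * x)
    let fp : ℝ → ℝ := fun θ =>
      Real.cos θ / Real.sin θ * Real.sin (k * (Real.pi / 2 - θ)) +
        k * Real.cos (k * (Real.pi / 2 - θ))
    let fm : ℝ → ℝ := fun θ =>
      Real.cos θ / Real.sin θ * Real.cos (k * (Real.pi / 2 - θ)) -
        k * Real.sin (k * (Real.pi / 2 - θ))
    ∀ θ ∈ Set.Ioo (0 : ℝ) Real.pi,
      (-(deriv (deriv fp) θ) + 2 / (Real.sin θ) ^ 2 * fp θ = k ^ 2 * fp θ) ∧
        (-(deriv (deriv fm) θ) + 2 / (Real.sin θ) ^ 2 * fm θ = k ^ 2 * fm θ) := by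
  intro k _ _ θ hθ
  exact h_eq_two_eigenfunctions_general k (Real.sin_pos_of_mem_Ioo hθ).ne'
end

section
/- Define g(y) = log(1 + ((π − y)/2)·cot(y/2)) − 2·log(sin(y/2)) − (π − y)·cot(y/2) for y ∈ (0, π). Then, as y → 0⁺, g(y) = −2π/y + 2 + log(4π) − 3·log y + (π/6)·y + O(y²); precisely, there exist constants C > 0 and δ ∈ (0, π) such that |g(y) − (−2π/y + 2 + log(4π) − 3·log y + (π/6)·y)| ≤ C·y² for all y ∈ (0, δ). -/
/-!
Replace `π` by a parameter `a > 0`. Since `cot t = 1/t - t/3 + O(t³)`, the argument of the first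
logarithm is `1 + (a/y - 1 - a y/12 + O(y²)) = (a/y)(1 + O(y²))`: its constant terms cancel.
Likewise `sin (y/2) = (y/2)(1 + O(y²))`, so the logarithms contribute
`log (a/y) - 2 log (y/2) + O(y²) = log (4a) - 3 log y + O(y²)`, and the remaining term
`-(a - y) cot (y/2)` contributes `-2a/y + 2 + (a/6) y + O(y²)`.
-/

open Filter Topology Asymptotics Real

section General

variable {α E F : Type*}

theorem exists_norm_le_mul_of_isBigO_nhdsGT [TopologicalSpace α] [LinearOrder α] [OrderTopology α]
    [DenselyOrdered α] [SeminormedAddCommGroup E] [SeminormedAddCommGroup F] {f : α → E}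
    {g : α → F} {a b : α} (hab : a < b) (h : f =O[𝓝[>] a] g) :
    ∃ C > 0, ∃ δ ∈ Set.Ioo a b, ∀ y ∈ Set.Ioo a δ, ‖f y‖ ≤ C * ‖g y‖ := by
  obtain ⟨C, hC, hbound⟩ := h.exists_pos
  obtain ⟨c, hac, hcb⟩ := exists_between hab
  obtain ⟨δ, hδ, hsub⟩ := (mem_nhdsGT_iff_exists_mem_Ioc_Ioo_subset hac).1 hbound.bound
  exact ⟨C, hC, δ, ⟨hδ.1, hδ.2.trans_lt hcb⟩, fun y hy ↦ hsub hy⟩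

theorem isBigO_log_sub_log {l : Filter α} {f g h : α → ℝ} (hh : Tendsto h l (𝓝 0))
    (hfg : (fun x ↦ f x / g x - 1) =O[l] h) :
    (fun x ↦ log (f x) - log (g x)) =O[l] h := by
  have hratio : Tendsto (fun x ↦ f x / g x) l (𝓝 1) := by
    simpa using (hfg.trans_tendsto hh).add_const 1
  have hlog : (fun x ↦ log (f x / g x)) =O[l] h := by
    have := (hasDerivAt_log one_ne_zero).isBigO_sub.comp_tendsto hratio
    simp only [log_one, sub_zero] at this
    exact this.trans hfg
  refine hlog.congr' ?_ .rfl
  filter_upwards [hratio.eventually_ne one_ne_zero] with x hx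
  rw [div_ne_zero_iff] at hx
  exact log_div hx.1 hx.2

theorem tendsto_sq_nhdsWithin_zero (s : Set ℝ) : Tendsto (fun t : ℝ ↦ t ^ 2) (𝓝[s] 0) (𝓝 0) :=
  tendsto_nhdsWithin_of_tendsto_nhds <| (continuous_pow 2).tendsto' 0 0 (by simp)

theorem isBigO_pow_pow_nhdsWithin_zero {m n : ℕ} {s : Set ℝ} (h : m < n) :
    (fun y : ℝ ↦ y ^ n) =O[𝓝[s] 0] fun y ↦ y ^ m :=
  (isLittleO_pow_pow h).isBigO.mono nhdsWithin_le_nhds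

end General

section Trigonometric

theorem isBigO_sin_sub_cubic : (fun t ↦ sin t - (t - t ^ 3 / 6)) =O[𝓝 0] fun t ↦ t ^ 5 := by
  refine .of_bound (1 / 100) ?_
  filter_upwards [Metric.closedBall_mem_nhds (0 : ℝ) one_pos] with t ht
  have := sin_bound (x := t) (by simpa using ht)
  simp only [norm_eq_abs, abs_pow]
  linarith

theorem isBigO_cos_sub_quadratic :
    (fun t ↦ cos t - (1 - t ^ 2 / 2)) =O[𝓝 0] fun t ↦ t ^ 4 := by
  refine .of_bound (5 / 96) ?_
  filter_upwards [Metric.closedBall_mem_nhds (0 : ℝ) one_pos] with t ht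
  have := cos_bound (x := t) (by simpa using ht)
  simp only [norm_eq_abs, abs_pow]
  linarith

theorem isBigO_self_mul_cos_sub_one_sub_mul_sin :
    (fun t ↦ t * cos t - (1 - t ^ 2 / 3) * sin t) =O[𝓝 0] fun t ↦ t ^ 5 := by
  have hcos : (fun t ↦ t * (cos t - (1 - t ^ 2 / 2))) =O[𝓝 0] fun t ↦ t ^ 5 :=
    ((isBigO_refl (fun t : ℝ ↦ t) _).mul isBigO_cos_sub_quadratic).congr_right fun t ↦ by ring
  have hsin : (fun t ↦ (1 - t ^ 2 / 3) * (sin t - (t - t ^ 3 / 6))) =O[𝓝 0] fun t ↦ t ^ 5 := by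
    have hbdd : (fun t : ℝ ↦ 1 - t ^ 2 / 3) =O[𝓝 0] fun _ ↦ (1 : ℝ) :=
      (show Continuous fun t : ℝ ↦ 1 - t ^ 2 / 3 by fun_prop).continuousAt.isBigO_one ℝ
    exact (hbdd.mul isBigO_sin_sub_cubic).congr_right fun t ↦ one_mul _
  have hpow : (fun t : ℝ ↦ 1 / 18 * t ^ 5) =O[𝓝 0] fun t ↦ t ^ 5 :=
    isBigO_const_mul_self _ _ _
  exact ((hcos.sub hsin).sub hpow).congr_left fun t ↦ by ring

theorem eventually_sin_ne_zero_nhdsNE_zero : ∀ᶠ t in 𝓝[≠] (0 : ℝ), sin t ≠ 0 := by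
  simpa using (hasDerivAt_sin 0).eventually_ne (by simp)

theorem isBigO_cot_sub :
    (fun t ↦ cot t - (1 / t - t / 3)) =O[𝓝[≠] 0] fun t ↦ t ^ 3 := by
  have hne : ∀ᶠ t in 𝓝[≠] (0 : ℝ), t ≠ 0 := eventually_mem_nhdsWithin
  have hinv : (fun t ↦ (sin t)⁻¹) =O[𝓝[≠] 0] fun t ↦ t⁻¹ :=
    (isEquivalent_sin.inv.isBigO).mono nhdsWithin_le_nhds
  have hnum := isBigO_self_mul_cos_sub_one_sub_mul_sin.mono
    (nhdsWithin_le_nhds (s := {(0 : ℝ)}ᶜ))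
  refine ((hnum.mul hinv).mul (isBigO_refl (fun t : ℝ ↦ t⁻¹) _)).congr' ?_ ?_
  · filter_upwards [hne, eventually_sin_ne_zero_nhdsNE_zero] with t ht hsin
    rw [cot_eq_cos_div_sin]
    field_simp
  · filter_upwards [hne] with t ht
    field_simp

theorem isBigO_log_sin_sub_log :
    (fun t ↦ log (sin t) - log t) =O[𝓝[≠] 0] fun t ↦ t ^ 2 := by
  have hne : ∀ᶠ t in 𝓝[≠] (0 : ℝ), t ≠ 0 := eventually_mem_nhdsWithin
  have hsin : (fun t ↦ sin t - t) =O[𝓝[≠] 0] fun t ↦ t ^ 3 := by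
    have hquintic : (fun t : ℝ ↦ t ^ 5) =O[𝓝 0] fun t ↦ t ^ 3 :=
      (isLittleO_pow_pow (by norm_num)).isBigO
    have hcubic : (fun t : ℝ ↦ 1 / 6 * t ^ 3) =O[𝓝 0] fun t ↦ t ^ 3 :=
      isBigO_const_mul_self _ _ _
    exact (((isBigO_sin_sub_cubic.trans hquintic).sub hcubic).mono nhdsWithin_le_nhds).congr_left
      fun t ↦ by ring
  refine isBigO_log_sub_log (tendsto_sq_nhdsWithin_zero _)
    ((hsin.mul (isBigO_refl (fun t : ℝ ↦ t⁻¹) _)).congr' ?_ ?_)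
  all_goals
    filter_upwards [hne] with t ht
    field_simp

end Trigonometric

section HalfAngle

theorem tendsto_half_nhdsGT_zero_nhdsNE_zero :
    Tendsto (fun y : ℝ ↦ y / 2) (𝓝[>] 0) (𝓝[≠] 0) := by
  refine tendsto_nhdsWithin_iff.2 ⟨?_, ?_⟩
  · exact tendsto_nhdsWithin_of_tendsto_nhds <|
      (continuous_id.div_const (2 : ℝ)).tendsto' 0 0 (by simp)
  · filter_upwards [self_mem_nhdsWithin] with y (hy : 0 < y)
    exact (half_pos hy).ne'

theorem isBigO_half_pow (n : ℕ) (l : Filter ℝ) :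
    (fun y : ℝ ↦ (y / 2) ^ n) =O[l] fun y ↦ y ^ n :=
  (isBigO_const_mul_self ((1 / 2 : ℝ) ^ n) (fun y ↦ y ^ n) l).congr_left fun y ↦ by
    rw [← mul_pow]; ring

theorem isBigO_cot_half_sub :
    (fun y ↦ cot (y / 2) - (2 / y - y / 6)) =O[𝓝[>] 0] fun y ↦ y ^ 3 := by
  refine ((isBigO_cot_sub.comp_tendsto tendsto_half_nhdsGT_zero_nhdsNE_zero).trans
    (isBigO_half_pow 3 _)).congr_left fun y ↦ ?_
  simp only [Function.comp_apply, one_div_div]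
  ring

theorem isBigO_log_sin_half_sub :
    (fun y ↦ log (sin (y / 2)) - log (y / 2)) =O[𝓝[>] 0] fun y ↦ y ^ 2 :=
  (isBigO_log_sin_sub_log.comp_tendsto tendsto_half_nhdsGT_zero_nhdsNE_zero).trans
    (isBigO_half_pow 2 _)

theorem isBigO_sub_mul_cot_half_sub (a : ℝ) :
    (fun y ↦ (a - y) * (cot (y / 2) - (2 / y - y / 6))) =O[𝓝[>] 0] fun y ↦ y ^ 3 := by
  have hbdd : (fun y : ℝ ↦ a - y) =O[𝓝[>] 0] fun _ ↦ (1 : ℝ) :=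
    ((continuous_sub_left a).continuousAt.isBigO_one ℝ).mono nhdsWithin_le_nhds
  exact (hbdd.mul isBigO_cot_half_sub).congr_right fun y ↦ one_mul _

theorem isBigO_log_one_add_mul_cot_half_sub {a : ℝ} (ha : a ≠ 0) :
    (fun y ↦ log (1 + (a - y) / 2 * cot (y / 2)) - log (a / y)) =O[𝓝[>] 0] fun y ↦ y ^ 2 := by
  have hquadratic : (fun y : ℝ ↦ 1 / 12 * y ^ 2) =O[𝓝[>] 0] fun y ↦ y ^ 2 :=
    isBigO_const_mul_self _ _ _
  have hcubic : (fun y : ℝ ↦ 1 / (12 * a) * y ^ 3) =O[𝓝[>] 0] fun y ↦ y ^ 2 :=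
    (isBigO_const_mul_self _ _ _).trans (isBigO_pow_pow_nhdsWithin_zero (by norm_num))
  have hcot : (fun y ↦ 1 / (2 * a) * (y * ((a - y) * (cot (y / 2) - (2 / y - y / 6)))))
      =O[𝓝[>] 0] fun y ↦ y ^ 2 := by
    have hquartic := (isBigO_refl (fun y : ℝ ↦ y) _).mul (isBigO_sub_mul_cot_half_sub a)
    exact ((hquartic.congr_right fun y ↦ (pow_succ' y 3).symm).trans
      (isBigO_pow_pow_nhdsWithin_zero (by norm_num))).const_mul_left _
  refine isBigO_log_sub_log (tendsto_sq_nhdsWithin_zero _)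
    (((hcubic.sub hquadratic).add hcot).congr' ?_ .rfl)
  filter_upwards [self_mem_nhdsWithin] with y (hy : 0 < y)
  field_simp
  ring

end HalfAngle

/-- The resummed one-loop exponent, with a parameter `a` in place of `π`: the physical exponent
at `x = π - y` is `oneLoopExponent π y`. -/
noncomputable def oneLoopExponent (a y : ℝ) : ℝ :=
  log (1 + (a - y) / 2 * cot (y / 2)) - 2 * log (sin (y / 2)) - (a - y) * cot (y / 2)

theorem oneLoopExponent_sub_expansion_eq {a y : ℝ} (ha : a ≠ 0) (hy : y ≠ 0) :
    oneLoopExponent a y - (-2 * a / y + 2 + log (4 * a) - 3 * log y + a / 6 * y) =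
      (log (1 + (a - y) / 2 * cot (y / 2)) - log (a / y)) -
        2 * (log (sin (y / 2)) - log (y / 2)) -
        (a - y) * (cot (y / 2) - (2 / y - y / 6)) - 1 / 6 * y ^ 2 := by
  have hlog : log (a / y) - 2 * log (y / 2) = log (4 * a) - 3 * log y := by
    have hlog4 : log 4 = 2 * log 2 := by
      rw [show (4 : ℝ) = 2 ^ 2 by norm_num, log_pow, Nat.cast_ofNat]
    rw [log_div ha hy, log_div hy two_ne_zero, log_mul four_ne_zero ha, hlog4]
    ring
  have hpole : (a - y) * (2 / y - y / 6) = 2 * a / y - 2 - a / 6 * y + 1 / 6 * y ^ 2 := by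
    field_simp
    ring
  rw [oneLoopExponent]
  linear_combination hlog - hpole

theorem one_loop_exponent_expansion_general {a : ℝ} (ha : 0 < a) :
    (fun y ↦ oneLoopExponent a y - (-2 * a / y + 2 + log (4 * a) - 3 * log y + a / 6 * y))
      =O[𝓝[>] 0] fun y ↦ y ^ 2 := by
  have hlog := isBigO_log_one_add_mul_cot_half_sub ha.ne'
  have hsin := isBigO_log_sin_half_sub.const_mul_left 2
  have hcot := (isBigO_sub_mul_cot_half_sub a).trans
    (isBigO_pow_pow_nhdsWithin_zero (show 2 < 3 by norm_num))
  have hsq : (fun y : ℝ ↦ 1 / 6 * y ^ 2) =O[𝓝[>] 0] fun y ↦ y ^ 2 :=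
    isBigO_const_mul_self _ _ _
  refine (((hlog.sub hsin).sub hcot).sub hsq).congr' ?_ .rfl
  filter_upwards [self_mem_nhdsWithin] with y (hy : 0 < y)
  exact (oneLoopExponent_sub_expansion_eq ha.ne' hy.ne').symm

/-- Small-y expansion of the Sommerfeld–Watson resummed h = 2 one-loop exponent
g(y) = log(1 + ((π−y)/2)cot(y/2)) − 2log sin(y/2) − (π−y)cot(y/2):
g(y) = −2π/y + 2 + log(4π) − 3log y + (π/6)y + O(y²) as y → 0⁺. -/
theorem one_loop_exponent_expansion :
    let g : ℝ → ℝ := fun y =>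
      Real.log (1 + ((Real.pi - y) / 2) * (Real.cos (y / 2) / Real.sin (y / 2))) -
        2 * Real.log (Real.sin (y / 2)) -
          (Real.pi - y) * (Real.cos (y / 2) / Real.sin (y / 2))
    ∃ C > 0, ∃ δ ∈ Set.Ioo (0 : ℝ) Real.pi, ∀ y ∈ Set.Ioo (0 : ℝ) δ,
      |g y -
          (-2 * Real.pi / y + 2 + Real.log (4 * Real.pi) - 3 * Real.log y +
            (Real.pi / 6) * y)| ≤ C * y ^ 2 := by
  simpa only [oneLoopExponent, cot_eq_cos_div_sin, norm_eq_abs, abs_sq] using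
    exists_norm_le_mul_of_isBigO_nhdsGT pi_pos (one_loop_exponent_expansion_general pi_pos)
end
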